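/- arXiv:1006.5909 — 2 statements merged into one kernel-verified Lean document; each statement's English description precedes it below -/
import Mathlib

section
/- Let G be a finite subgroup of SL(3,ℂ) acting irreducibly on ℂ³, and suppose G has a nonzero semi-invariant homogeneous polynomial f of degree at most 2. Then f has degree exactly 2, the quadratic form f is nondegenerate (its zero locus in ℙ² is a smooth conic left invariant by Ḡ), and Ḡ, the image of G in PGL(3,ℂ), is isomorphic to a dihedral group of order 2n for some n ≥ 2, to the alternating group A₄, to the symmetric group S₄, or to the alternating group A₅. -/
open Matrix

lemma aux_alt_of_action {H X : Type*} [Group H] [Finite H] [MulAction H X] (n : ℕ)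
    (hn : 2 ≤ n) (hX : Nat.card X = n) (hf : ∀ g : H, (∀ x : X, g • x = x) → g = 1)
    (hc : 2 * Nat.card H = n.factorial) : Nonempty (H ≃* alternatingGroup (Fin n)) := by
  have : Finite X := Nat.finite_of_card_ne_zero (by omega)
  have : Nontrivial (Fin n) := Fin.nontrivial_iff_two_le.mpr hn
  let e : X ≃ Fin n := Finite.equivFinOfCardEq hX
  let ψ : H →* Equiv.Perm (Fin n) := (e.permCongrHom.toMonoidHom).comp (MulAction.toPermHom H X)
  have hinj : Function.Injective ψ := by
    rw [injective_iff_map_eq_one]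
    intro g hg
    apply hf
    have h1 : MulAction.toPermHom H X g = 1 := by
      apply e.permCongrHom.injective
      rw [map_one]; exact hg
    intro x
    have := Equiv.ext_iff.1 h1 x
    simpa using this
  have hcard : Nat.card ψ.range = Nat.card H := (Nat.card_congr (MonoidHom.ofInjective hinj).toEquiv).symm
  have hi : ψ.range.index = 2 := by
    have := ψ.range.index_mul_card
    rw [hcard, Nat.card_perm, Nat.card_fin, ← hc] at this
    exact Nat.eq_of_mul_eq_mul_right Nat.card_pos this
  have := Equiv.Perm.eq_alternatingGroup_of_index_eq_two hi
  rw [← this]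
  exact ⟨MonoidHom.ofInjective hinj⟩

lemma aux_sym_of_action {H X : Type*} [Group H] [Finite H] [MulAction H X] (n : ℕ)
    (hn : 2 ≤ n) (hX : Nat.card X = n) (hf : ∀ g : H, (∀ x : X, g • x = x) → g = 1)
    (hc : Nat.card H = n.factorial) : Nonempty (H ≃* Equiv.Perm (Fin n)) := by
  have : Finite X := Nat.finite_of_card_ne_zero (by omega)
  let e : X ≃ Fin n := Finite.equivFinOfCardEq hX
  let ψ : H →* Equiv.Perm (Fin n) := (e.permCongrHom.toMonoidHom).comp (MulAction.toPermHom H X)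
  have hinj : Function.Injective ψ := by
    rw [injective_iff_map_eq_one]
    intro g hg
    apply hf
    have h1 : MulAction.toPermHom H X g = 1 := by
      apply e.permCongrHom.injective
      rw [map_one]; exact hg
    intro x
    have := Equiv.ext_iff.1 h1 x
    simpa using this
  have hb : Function.Bijective ψ := by
    rw [Nat.bijective_iff_injective_and_card]
    refine ⟨hinj, ?_⟩
    rw [Nat.card_perm, Nat.card_fin, hc]
  exact ⟨MulEquiv.ofBijective ψ hb⟩

lemma aux_num (N n1 n2 n3 m1 m2 m3 : ℕ) (h1 : n1 * m1 = N) (h2 : n2 * m2 = N) (h3 : n3 * m3 = N)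
    (a1 : 3 ≤ n1) (a2 : 3 ≤ n2) (a3 : 3 ≤ n3) (b1 : 2 ≤ m1) (h12 : m1 ≤ m2) (h23 : m2 ≤ m3)
    (hs : n1 + n2 + n3 = N + 2) :
    m1 = 2 ∧ m2 = 3 ∧ ((m3 = 3 ∧ N = 12) ∨ (m3 = 4 ∧ N = 24) ∨ (m3 = 5 ∧ N = 60)) := by
  have hm1 : m1 = 2 := by
    by_contra hne
    have e1 : n1 * 3 ≤ N := h1 ▸ Nat.mul_le_mul_left _ (by omega)
    have e2 : n2 * 3 ≤ N := h2 ▸ Nat.mul_le_mul_left _ (by omega)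
    have e3 : n3 * 3 ≤ N := h3 ▸ Nat.mul_le_mul_left _ (by omega)
    omega
  subst hm1
  have hm2 : m2 = 3 := by
    by_contra hne
    rcases (by omega : m2 = 2 ∨ 4 ≤ m2) with h | h
    · subst h; omega
    · have e2 : n2 * 4 ≤ N := h2 ▸ Nat.mul_le_mul_left _ (by omega)
      have e3 : n3 * 4 ≤ N := h3 ▸ Nat.mul_le_mul_left _ (by omega)
      omega
  subst hm2
  have hm3 : m3 < 6 := by
    by_contra hne
    have e3 : n3 * 6 ≤ N := h3 ▸ Nat.mul_le_mul_left _ (by omega)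
    omega
  refine ⟨rfl, rfl, ?_⟩
  interval_cases m3 <;> omega

section
variable {H P : Type*} [Group H] [Finite H] [Finite P] [MulAction H P]

lemma aux_orb_stab (x : P) :
    (MulAction.orbit H x).ncard * Nat.card (MulAction.stabilizer H x) = Nat.card H := by
  rw [← MulAction.index_stabilizer, Subgroup.index_mul_card]

lemma aux_stab_orbit {x y : P} (h : y ∈ MulAction.orbit H x) :
    Nat.card (MulAction.stabilizer H y) = Nat.card (MulAction.stabilizer H x) := by
  have h1 := aux_orb_stab (H := H) x
  have h2 := aux_orb_stab (H := H) y
  rw [MulAction.orbit_eq_iff.mpr h, ← h1] at h2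
  refine Nat.eq_of_mul_eq_mul_left ?_ h2
  rw [Set.ncard_pos]
  exact MulAction.nonempty_orbit x

lemma aux_count [Nontrivial H]
    (hfix : ∀ g : H, g ≠ 1 → (MulAction.fixedBy P g).ncard = 2)
    (hstab : ∀ x : P, ∃ g : H, g ≠ 1 ∧ g • x = x)
    (horb : ∀ x : P, 3 ≤ (MulAction.orbit H x).ncard) :
    ∃ a b c : P, (∀ x : P, x ∈ MulAction.orbit H a ∨ x ∈ MulAction.orbit H b ∨
        x ∈ MulAction.orbit H c) ∧
      Nat.card (MulAction.stabilizer H a) = 2 ∧ Nat.card (MulAction.stabilizer H b) = 3 ∧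
      ((Nat.card (MulAction.stabilizer H c) = 3 ∧ Nat.card H = 12) ∨
       (Nat.card (MulAction.stabilizer H c) = 4 ∧ Nat.card H = 24) ∨
       (Nat.card (MulAction.stabilizer H c) = 5 ∧ Nat.card H = 60)) := by
  classical
  have := Fintype.ofFinite H
  have := Fintype.ofFinite P
  have hst2 : ∀ x : P, 2 ≤ Nat.card (MulAction.stabilizer H x) := by
    intro x
    obtain ⟨g, hg, hx⟩ := hstab x
    have : Nontrivial (MulAction.stabilizer H x) :=
      ⟨⟨⟨g, hx⟩, 1, fun h => hg (congrArg Subtype.val h)⟩⟩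
    exact Finite.one_lt_card
  have hB := MulAction.sum_card_fixedBy_eq_card_orbits_mul_card_group H P
  have hB2 : ∑ g : H, Fintype.card (MulAction.fixedBy P g) = Fintype.card P + 2 * (Fintype.card H - 1) := by
    rw [← Finset.add_sum_erase _ _ (Finset.mem_univ (1 : H))]
    congr 1
    · refine Fintype.card_congr ((Equiv.setCongr ?_).trans (Equiv.Set.univ P))
      ext x; simp
    · rw [Finset.sum_congr rfl (g := fun _ => 2)]
      · simp [mul_comm]
      · intro g hg
        rw [← hfix g (Finset.ne_of_mem_erase hg), ← Nat.card_coe_set_eq, Nat.card_eq_fintype_card]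
  set Ω := MulAction.orbitRel.Quotient H P
  have hP : Fintype.card P = ∑ ω : Ω, (MulAction.orbit H (Quotient.out ω)).ncard := by
    rw [Fintype.card_congr (MulAction.selfEquivSigmaOrbits H P), Fintype.card_sigma]
    refine Finset.sum_congr rfl fun ω _ => ?_
    rw [← Nat.card_eq_fintype_card, Nat.card_coe_set_eq]
  set N := Fintype.card H with hN
  have hN2 : 2 ≤ N := Fintype.one_lt_card
  have hNc : Nat.card H = N := Nat.card_eq_fintype_card
  set k := Fintype.card Ω with hk
  have hBk : Fintype.card P + 2 * (N - 1) = k * N := by rw [← hB2, hB]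
  have hle : 2 * Fintype.card P ≤ k * N := by
    rw [hP, Finset.mul_sum]
    refine (Finset.sum_le_card_nsmul _ _ N ?_).trans ?_
    · intro ω _
      rw [← hNc, ← aux_orb_stab (H := H) (Quotient.out ω), mul_comm]
      exact Nat.mul_le_mul_left _ (hst2 _)
    · simp [hk]
  have hge : k * 3 ≤ Fintype.card P := by
    rw [hP]
    have := Finset.card_nsmul_le_sum (Finset.univ : Finset Ω)
      (fun ω => (MulAction.orbit H (Quotient.out ω)).ncard) 3 (fun ω _ => horb _)
    simpa [hk] using this
  have hk3 : k = 3 := by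
    have : k < 4 := by
      by_contra hcon
      have : 4 * N ≤ k * N := Nat.mul_le_mul_right _ (by omega)
      omega
    interval_cases k <;> omega
  let e : Fin 3 ≃ Ω := (Fintype.equivFinOfCardEq hk3).symm
  let r : Fin 3 → P := fun i => Quotient.out (e i)
  have hcov : ∀ x : P, ∃ i, x ∈ MulAction.orbit H (r i) := by
    intro x
    obtain ⟨i, hi⟩ := e.surjective (Quotient.mk _ x)
    refine ⟨i, ?_⟩
    have : Quotient.mk (MulAction.orbitRel H P) (r i) = Quotient.mk _ x := by
      simp only [r, Quotient.out_eq]; exact hi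
    exact (MulAction.orbitRel_apply.1 (Quotient.exact this.symm))
  have hsum : (MulAction.orbit H (r 0)).ncard + (MulAction.orbit H (r 1)).ncard +
      (MulAction.orbit H (r 2)).ncard = N + 2 := by
    have : ∑ ω : Ω, (MulAction.orbit H (Quotient.out ω)).ncard = ∑ i : Fin 3, (MulAction.orbit H (r i)).ncard :=
      (Equiv.sum_comp e _).symm
    rw [Fin.sum_univ_three] at this
    rw [← this, ← hP]
    rw [hk3] at hBk
    omega
  rw [hNc]
  by_contra hcon
  have main : ∀ i j l : Fin 3, (∀ t, t = i ∨ t = j ∨ t = l) →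
      Nat.card (MulAction.stabilizer H (r i)) ≤ Nat.card (MulAction.stabilizer H (r j)) →
      Nat.card (MulAction.stabilizer H (r j)) ≤ Nat.card (MulAction.stabilizer H (r l)) →
      (MulAction.orbit H (r i)).ncard + (MulAction.orbit H (r j)).ncard +
      (MulAction.orbit H (r l)).ncard = N + 2 → False := by
    intro i j l ht h1 h2 h3
    have := aux_num N _ _ _ _ _ _ ((aux_orb_stab (H := H) (r i)).trans hNc)
      ((aux_orb_stab (H := H) (r j)).trans hNc) ((aux_orb_stab (H := H) (r l)).trans hNc)
      (horb _) (horb _) (horb _) (hst2 _) h1 h2 h3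
    refine hcon ⟨r i, r j, r l, ?_, this⟩
    intro x
    obtain ⟨t, htx⟩ := hcov x
    rcases ht t with h | h | h <;> subst h <;> tauto
  rcases le_total (Nat.card (MulAction.stabilizer H (r 0))) (Nat.card (MulAction.stabilizer H (r 1))) with h01 | h01 <;>
  rcases le_total (Nat.card (MulAction.stabilizer H (r 0))) (Nat.card (MulAction.stabilizer H (r 2))) with h02 | h02 <;>
  rcases le_total (Nat.card (MulAction.stabilizer H (r 1))) (Nat.card (MulAction.stabilizer H (r 2))) with h12 | h12
  · exact main 0 1 2 (by decide) h01 h12 (by omega)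
  · exact main 0 2 1 (by decide) h02 h12 (by omega)
  · exact main 0 1 2 (by decide) h01 h12 (by omega)
  · exact main 2 0 1 (by decide) h02 h01 (by omega)
  · exact main 1 0 2 (by decide) h01 h02 (by omega)
  · exact main 1 0 2 (by decide) h01 h02 (by omega)
  · exact main 1 2 0 (by decide) h12 h02 (by omega)
  · exact main 2 1 0 (by decide) h12 h01 (by omega)
end

section
variable {H P : Type*} [Group H] [Finite H] [Finite P] [MulAction H P]

lemma aux_normal
    (hfix : ∀ g : H, g ≠ 1 → (MulAction.fixedBy P g).ncard = 2)
    (horb : ∀ x : P, 3 ≤ (MulAction.orbit H x).ncard)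
    (K : Subgroup H) [hK : K.Normal] (hne : K ≠ ⊥) (x : P) (hx : ∀ k ∈ K, k • x = x) : False := by
  obtain ⟨k, hkK, hk⟩ : ∃ k : H, k ∈ K ∧ k ≠ 1 := by
    obtain ⟨k, hk⟩ := (Subgroup.ne_bot_iff_exists_ne_one (H := K)).1 hne
    exact ⟨k, k.2, fun h => hk (Subtype.ext h)⟩
  have hsub : MulAction.orbit H x ⊆ MulAction.fixedBy P k := by
    rintro _ ⟨h, rfl⟩
    have := hx _ (hK.conj_mem k hkK h⁻¹)
    rw [inv_inv, mul_smul, mul_smul, inv_smul_eq_iff] at this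
    exact this
  have h1 := Set.ncard_le_ncard hsub (Set.toFinite _)
  have h2 := horb x
  have h3 := hfix k hk
  omega

lemma aux_card_filter {G : Type*} [Group G] [Fintype G] (K : Subgroup G)
    [DecidablePred fun g : G => g ∈ K] :
    (Finset.univ.filter fun g : G => g ∈ K).card = Nat.card K := by
  rw [Nat.card_eq_fintype_card, Fintype.card_subtype]

lemma aux_one_mem_filter {G : Type*} [Group G] [Fintype G] (K : Subgroup G)
    [DecidablePred fun g : G => g ∈ K] :
    (1 : G) ∈ (Finset.univ.filter fun g : G => g ∈ K) :=
  Finset.mem_filter.2 ⟨Finset.mem_univ _, K.one_mem⟩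

lemma aux_S4
    (hfix : ∀ g : H, g ≠ 1 → (MulAction.fixedBy P g).ncard = 2)
    (horb : ∀ x : P, 3 ≤ (MulAction.orbit H x).ncard) (b : P)
    (hb : Nat.card (MulAction.stabilizer H b) = 3) (hN : Nat.card H = 24) :
    Nonempty (H ≃* Equiv.Perm (Fin 4)) := by
  classical
  have : Fact (Nat.Prime 3) := ⟨Nat.prime_three⟩
  have hfac : (24 : ℕ).factorization 3 = 1 := by
    have : (24 : ℕ) = 2 ^ 3 * 3 := by norm_num
    rw [this, Nat.factorization_mul (by norm_num) (by norm_num), Nat.factorization_pow]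
    simp [Nat.prime_two.factorization, Nat.prime_three.factorization]
  have hcard : ∀ Q : Sylow 3 H, Nat.card Q = 3 := by
    intro Q
    rw [Q.card_eq_multiplicity, hN, hfac, pow_one]
  let Q : Sylow 3 H := Sylow.ofCard (MulAction.stabilizer H b) (by rw [hN, hfac, hb, pow_one])
  have hQ : (Q : Subgroup H) = MulAction.stabilizer H b := rfl
  have hidx : (Q : Subgroup H).index = 8 := by
    have := (Q : Subgroup H).index_mul_card
    rw [hQ, hb, hN] at this
    rw [hQ]; omega
  have hne1 : Nat.card (Sylow 3 H) ≠ 1 := by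
    intro h1
    have hsub : Subsingleton (Sylow 3 H) := (Nat.card_eq_one_iff_unique.1 h1).1
    have hnorm : (Q : Subgroup H).Normal := Sylow.normal_of_subsingleton Q
    refine aux_normal hfix horb (Q : Subgroup H) ?_ b ?_
    · intro h
      rw [hQ] at h
      rw [h] at hb
      simp at hb
    · intro k hk; exact hk
  have hn4 : Nat.card (Sylow 3 H) = 4 := by
    have h1 := card_sylow_modEq_one 3 H
    have h2 := Q.card_dvd_index
    rw [hidx] at h2
    have h3 := Nat.le_of_dvd (by norm_num) h2
    unfold Nat.ModEq at h1
    generalize Nat.card (Sylow 3 H) = n at *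
    interval_cases n <;> omega
  refine aux_sym_of_action (X := Sylow 3 H) 4 (by norm_num) hn4 ?_ (by rw [hN]; rfl)
  let K := (MulAction.toPermHom H (Sylow 3 H)).ker
  have hKmem : ∀ g : H, g ∈ K ↔ ∀ R : Sylow 3 H, g • R = R := by
    intro g
    rw [MonoidHom.mem_ker, Equiv.ext_iff]
    rfl
  have hKle : K ≤ Subgroup.normalizer (Q : Set H) := by
    intro g hg
    exact Sylow.smul_eq_iff_mem_normalizer.1 ((hKmem g).1 hg Q)
  have hn6 : Nat.card (Subgroup.normalizer (Q : Set H)) = 6 := by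
    have h1 := (Subgroup.normalizer (Q : Set H)).index_mul_card
    have h2 := Q.card_eq_index_normalizer
    rw [hn4] at h2
    rw [hN] at h1
    have h3 : (Subgroup.normalizer (Q : Set H)).index = 4 := h2.symm
    rw [h3] at h1
    omega
  have hK6 : Nat.card K ∣ 6 := hn6 ▸ Subgroup.card_dvd_of_le hKle
  have hK3 : ¬ 3 ∣ Nat.card K := by
    intro h3
    obtain ⟨c, hc⟩ := exists_prime_orderOf_dvd_card' 3 h3
    have hc3 : orderOf (c : H) = 3 := by rw [← hc]; exact Subgroup.orderOf_coe c
    have hcz : Nat.card (Subgroup.zpowers (c : H)) = 3 := by rw [Nat.card_zpowers, hc3]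
    have hp : IsPGroup 3 (Subgroup.zpowers (c : H)) := IsPGroup.of_card (n := 1) (by rw [hcz, pow_one])
    have hall : ∀ R : Sylow 3 H, (R : Subgroup H) = Subgroup.zpowers (c : H) := by
      intro R
      have h1 := hp.inf_normalizer_sylow R
      have h2 : Subgroup.zpowers (c : H) ≤ Subgroup.normalizer (R : Set H) := by
        rw [Subgroup.zpowers_le]
        exact Sylow.smul_eq_iff_mem_normalizer.1 ((hKmem c).1 c.2 R)
      have h3 : Subgroup.zpowers (c : H) ≤ R := by
        rw [← inf_eq_left]
        rw [inf_eq_left.2 h2] at h1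
        exact h1.symm
      exact (Subgroup.eq_of_le_of_card_ge h3 (by rw [hcz]; exact (hcard R).le)).symm
    apply hne1
    have hs : Subsingleton (Sylow 3 H) := ⟨fun R S => Sylow.ext ((hall R).trans (hall S).symm)⟩
    have hn : Nonempty (Sylow 3 H) := ⟨Q⟩
    exact Nat.card_eq_one_iff_unique.2 ⟨hs, hn⟩
  have hKbot : K = ⊥ := by
    by_contra hne
    have hK2 : Nat.card K = 2 := by
      have h1 : Nat.card K ≠ 1 := fun h => hne (Subgroup.card_eq_one.1 h)
      have h2 := Nat.le_of_dvd (by norm_num) hK6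
      generalize Nat.card K = n at *
      interval_cases n <;> omega
    obtain ⟨k, hk⟩ := (Subgroup.ne_bot_iff_exists_ne_one (H := K)).1 hne
    have hk1 : (k : H) ≠ 1 := fun h => hk (Subtype.ext h)
    have hz : Subgroup.zpowers (k : H) = K := by
      refine Subgroup.eq_of_le_of_card_ge (by rw [Subgroup.zpowers_le]; exact k.2) ?_
      rw [hK2]
      have : Nontrivial (Subgroup.zpowers (k : H)) :=
        ⟨⟨⟨k, Subgroup.mem_zpowers _⟩, 1, fun h => hk1 (congrArg Subtype.val h)⟩⟩
      exact Finite.one_lt_card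
    obtain ⟨x, hx⟩ : (MulAction.fixedBy P (k : H)).Nonempty := by
      rw [← Set.ncard_pos, hfix _ hk1]; norm_num
    refine aux_normal hfix horb K hne x ?_
    intro k' hk'
    have : Subgroup.zpowers (k : H) ≤ MulAction.stabilizer H x := by
      rw [Subgroup.zpowers_le]; exact hx
    rw [hz] at this
    exact this hk'
  intro g hg
  have : g ∈ K := (hKmem g).2 hg
  rw [hKbot] at this
  exact this

lemma aux_A4
    (hfix : ∀ g : H, g ≠ 1 → (MulAction.fixedBy P g).ncard = 2) (b : P)
    (hb : Nat.card (MulAction.stabilizer H b) = 3) (hN : Nat.card H = 12) :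
    Nonempty (H ≃* alternatingGroup (Fin 4)) := by
  have h4 : (MulAction.orbit H b).ncard = 4 := by
    have := aux_orb_stab (H := H) b
    rw [hb, hN] at this
    omega
  refine aux_alt_of_action (X := MulAction.orbit H b) 4 (by norm_num) h4 ?_ (by rw [hN]; rfl)
  intro g hg
  by_contra hne
  have hsub : MulAction.orbit H b ⊆ MulAction.fixedBy P g := by
    intro x hx
    exact congrArg Subtype.val (hg ⟨x, hx⟩)
  have h1 := Set.ncard_le_ncard hsub (Set.toFinite _)
  have h3 := hfix g hne
  omega

lemma aux_A5
    (hfix : ∀ g : H, g ≠ 1 → (MulAction.fixedBy P g).ncard = 2)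
    (a b c : P) (hcov : ∀ x : P, x ∈ MulAction.orbit H a ∨ x ∈ MulAction.orbit H b ∨
        x ∈ MulAction.orbit H c)
    (ha : Nat.card (MulAction.stabilizer H a) = 2)
    (hb : Nat.card (MulAction.stabilizer H b) = 3)
    (hc : Nat.card (MulAction.stabilizer H c) = 5) (hN : Nat.card H = 60) :
    Nonempty (H ≃* alternatingGroup (Fin 5)) := by
  classical
  have := Fintype.ofFinite H
  have := Fintype.ofFinite P
  have : Fact (Nat.Prime 2) := ⟨Nat.prime_two⟩
  have hm : ∀ x : P, Nat.card (MulAction.stabilizer H x) = 2 ∨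
      Nat.card (MulAction.stabilizer H x) = 3 ∨ Nat.card (MulAction.stabilizer H x) = 5 := by
    intro x
    rcases hcov x with h | h | h <;> rw [aux_stab_orbit h] <;> omega
  have hprime : ∀ x : P, (Nat.card (MulAction.stabilizer H x)).Prime := by
    intro x
    rcases hm x with h | h | h <;> rw [h] <;> norm_num
  have hsame : ∀ x y : P, Nat.card (MulAction.stabilizer H x) = Nat.card (MulAction.stabilizer H y) →
      y ∈ MulAction.orbit H x := by
    intro x y hxy
    have key : ∀ z, x ∈ MulAction.orbit H z → y ∈ MulAction.orbit H z → y ∈ MulAction.orbit H x := by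
      intro z h1 h2
      rwa [MulAction.orbit_eq_iff.2 h1]
    rcases hcov x with h | h | h <;> rcases hcov y with h' | h' | h' <;>
    first
    | exact key _ h h'
    | (exfalso; have e1 := aux_stab_orbit h; have e2 := aux_stab_orbit h'; omega)
  have hord : ∀ (g : H) (x : P), g ≠ 1 → g • x = x →
      orderOf g = Nat.card (MulAction.stabilizer H x) := by
    intro g x hg hx
    have h1 : orderOf g ∣ Nat.card (MulAction.stabilizer H x) := by
      have := orderOf_dvd_natCard (⟨g, hx⟩ : MulAction.stabilizer H x)
      rwa [← Subgroup.orderOf_coe] at this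
    rcases (Nat.dvd_prime (hprime x)).1 h1 with h | h
    · exact absurd (orderOf_eq_one_iff.1 h) hg
    · exact h
  have hex : ∀ g : H, g ≠ 1 → ∃ x : P, g • x = x := by
    intro g hg
    obtain ⟨x, hx⟩ : (MulAction.fixedBy P g).Nonempty := by
      rw [← Set.ncard_pos, hfix _ hg]; norm_num
    exact ⟨x, hx⟩
  have hord3 : ∀ g : H, g ≠ 1 → orderOf g = 2 ∨ orderOf g = 3 ∨ orderOf g = 5 := by
    intro g hg
    obtain ⟨x, hx⟩ := hex g hg
    rw [hord g x hg hx]; exact hm x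
  have hcount : ∀ x : P, ((Finset.univ.filter fun g : H =>
      orderOf g = Nat.card (MulAction.stabilizer H x)).card * 2 =
      (MulAction.orbit H x).ncard * (Nat.card (MulAction.stabilizer H x) - 1)) := by
    intro x
    have ht : (MulAction.orbit H x).ncard = (Finset.univ.filter fun y : P =>
        Nat.card (MulAction.stabilizer H y) = Nat.card (MulAction.stabilizer H x)).card := by
      rw [← Set.ncard_coe_finset]
      congr 1
      ext y
      simp only [Finset.coe_filter, Finset.mem_univ, true_and, Set.mem_ofPred_eq]
      exact ⟨fun h => aux_stab_orbit h, fun h => hsame x y h.symm⟩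
    rw [ht]
    refine Finset.card_mul_eq_card_mul (fun (g : H) (y : P) => g • y = y) ?_ ?_
    · intro g hg
      simp only [Finset.mem_filter, Finset.mem_univ, true_and] at hg
      have hg1 : g ≠ 1 := by
        rintro rfl
        rw [orderOf_one] at hg
        exact (hprime x).ne_one hg.symm
      rw [← hfix g hg1, ← Set.ncard_coe_finset]
      congr 1
      ext y
      simp only [Finset.mem_coe, Finset.mem_bipartiteAbove, Finset.mem_filter, Finset.mem_univ, true_and,
        MulAction.mem_fixedBy]
      exact ⟨fun h => h.2, fun h => ⟨by rw [← hord g y hg1 h, hg], h⟩⟩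
    · intro y hy
      simp only [Finset.mem_filter, Finset.mem_univ, true_and] at hy
      have : (Finset.bipartiteBelow (fun (g : H) (y : P) => g • y = y) (Finset.univ.filter fun g : H =>
          orderOf g = Nat.card (MulAction.stabilizer H x)) y) =
          (Finset.univ.filter fun g : H => g ∈ MulAction.stabilizer H y).erase 1 := by
        ext g
        simp only [Finset.mem_bipartiteBelow, Finset.mem_filter, Finset.mem_univ, true_and,
          Finset.mem_erase, MulAction.mem_stabilizer_iff]
        constructor
        · rintro ⟨h1, h2⟩
          refine ⟨?_, h2⟩
          rintro rfl
          rw [orderOf_one] at h1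
          exact (hprime x).ne_one h1.symm
        · rintro ⟨h1, h2⟩
          exact ⟨(hord g y h1 h2).trans hy, h2⟩
      rw [this, Finset.card_erase_of_mem (aux_one_mem_filter _), ← hy, aux_card_filter]
  have hge15 : ∀ x : P, 15 ≤ (Finset.univ.filter fun g : H =>
      orderOf g = Nat.card (MulAction.stabilizer H x)).card := by
    intro x
    have h1 := hcount x
    have h2 := aux_orb_stab (H := H) x
    rw [hN] at h2
    rcases hm x with h | h | h <;> rw [h] at h1 h2 ⊢ <;> omega
  have h15 : (Finset.univ.filter fun g : H => orderOf g = 2).card = 15 := by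
    have h1 := hcount a
    have h2 := aux_orb_stab (H := H) a
    rw [hN] at h2
    rw [ha] at h1 h2
    omega
  have hnormal : ∀ K : Subgroup H, K.Normal → K ≠ ⊥ → 16 ≤ Nat.card K := by
    intro K hK hne
    obtain ⟨k, hk⟩ := (Subgroup.ne_bot_iff_exists_ne_one (H := K)).1 hne
    have hk1 : (k : H) ≠ 1 := fun h => hk (Subtype.ext h)
    obtain ⟨x, hx⟩ := hex k hk1
    have hz : Subgroup.zpowers (k : H) = MulAction.stabilizer H x := by
      refine Subgroup.eq_of_le_of_card_ge (by rw [Subgroup.zpowers_le]; exact hx) ?_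
      rw [Nat.card_zpowers, hord _ x hk1 hx]
    have hle : MulAction.stabilizer H x ≤ K := by
      rw [← hz, Subgroup.zpowers_le]; exact k.2
    have hsub : insert 1 (Finset.univ.filter fun g : H =>
        orderOf g = Nat.card (MulAction.stabilizer H x)) ⊆ Finset.univ.filter fun g : H => g ∈ K := by
      intro g hg
      simp only [Finset.mem_insert, Finset.mem_filter, Finset.mem_univ, true_and] at hg ⊢
      rcases hg with rfl | hg
      · exact K.one_mem
      · have hg1 : g ≠ 1 := by
          rintro rfl
          rw [orderOf_one] at hg
          exact (hprime x).ne_one hg.symm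
        obtain ⟨y, hy⟩ := hex g hg1
        obtain ⟨h, rfl⟩ := hsame x y (by rw [← hord g y hg1 hy, hg])
        have h1 : h⁻¹ * g * h ∈ K := by
          apply hle
          rw [MulAction.mem_stabilizer_iff, mul_smul, mul_smul, inv_smul_eq_iff]
          exact hy
        have := hK.conj_mem _ h1 h
        simpa [mul_assoc] using this
    have h1 := Finset.card_le_card hsub
    rw [Finset.card_insert_of_notMem] at h1
    · have h2 := hge15 x
      have h3 : (Finset.univ.filter fun g : H => g ∈ K).card = Nat.card K := aux_card_filter _
      omega
    · simp only [Finset.mem_filter, Finset.mem_univ, true_and, orderOf_one]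
      exact fun h => (hprime x).ne_one h.symm
  have hcent : ∀ g : H, orderOf g = 2 → Nat.card (Subgroup.centralizer ({g} : Set H)) ≤ 4 := by
    intro g hg
    have hg1 : g ≠ 1 := by rintro rfl; simp at hg
    obtain ⟨x, hx⟩ := hex g hg1
    have h1 := aux_orb_stab (H := Subgroup.centralizer ({g} : Set H)) x
    have h2 : (MulAction.orbit (Subgroup.centralizer ({g} : Set H)) x).ncard ≤ 2 := by
      rw [← hfix g hg1]
      refine Set.ncard_le_ncard ?_ (Set.toFinite _)
      rintro _ ⟨⟨h, hh⟩, rfl⟩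
      have hcomm := Subgroup.mem_centralizer_singleton_iff.1 hh
      change g • h • x = h • x
      rw [← mul_smul, ← hcomm, mul_smul, hx]
    have h3 : Nat.card (MulAction.stabilizer (Subgroup.centralizer ({g} : Set H)) x) ≤ 2 := by
      rw [← hg, hord g x hg1 hx]
      refine Nat.card_le_card_of_injective (fun h => (⟨h.1.1, h.2⟩ : MulAction.stabilizer H x)) ?_
      intro h h' hh
      have h5 := Subtype.ext_iff.1 hh
      exact Subtype.ext (Subtype.ext h5)
    rw [← h1]
    exact Nat.mul_le_mul h2 h3
  have hfac : (60 : ℕ).factorization 2 = 2 := by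
    have : (60 : ℕ) = 2 ^ 2 * 15 := by norm_num
    rw [this, Nat.factorization_mul (by norm_num) (by norm_num), Finsupp.add_apply,
      Nat.prime_two.factorization_pow, Nat.factorization_eq_zero_of_not_dvd (by norm_num)]
    simp
  have hcard : ∀ Q : Sylow 2 H, Nat.card Q = 4 := by
    intro Q
    rw [Q.card_eq_multiplicity, hN, hfac]; norm_num
  have hQord : ∀ (Q : Sylow 2 H) (g : H), g ∈ Q → g ≠ 1 → orderOf g = 2 := by
    intro Q g hg hg1
    have h1 : orderOf g ∣ 4 := by
      have := orderOf_dvd_natCard (⟨g, hg⟩ : (Q : Subgroup H))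
      rw [← Subgroup.orderOf_coe] at this
      rwa [← hcard Q]
    rcases hord3 g hg1 with h | h | h <;> rw [h] at h1 <;> first | exact h | omega
  have hQc : ∀ (Q : Sylow 2 H) (g : H), g ∈ Q → g ≠ 1 →
      (Q : Subgroup H) = Subgroup.centralizer ({g} : Set H) := by
    intro Q g hg hg1
    refine Subgroup.eq_of_le_of_card_ge ?_ ((hcent g (hQord Q g hg hg1)).trans (hcard Q).ge)
    intro h hh
    rw [Subgroup.mem_centralizer_singleton_iff]
    have := IsPGroup.isMulCommutative_of_card_eq_prime_sq (p := 2) (G := (Q : Subgroup H)) (hcard Q)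
    exact congrArg Subtype.val (mul_comm' (⟨h, hh⟩ : (Q : Subgroup H)) ⟨g, hg⟩)
  have hn5 : Nat.card (Sylow 2 H) = 5 := by
    have := Fintype.ofFinite (Sylow 2 H)
    have key := Finset.card_mul_eq_card_mul (s := Finset.univ.filter fun g : H => orderOf g = 2)
      (t := (Finset.univ : Finset (Sylow 2 H))) (fun (g : H) (Q : Sylow 2 H) => g ∈ Q) (m := 1) (n := 3) ?_ ?_
    · rw [h15, Finset.card_univ, ← Nat.card_eq_fintype_card] at key
      omega
    · intro g hg
      simp only [Finset.mem_filter, Finset.mem_univ, true_and] at hg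
      have hg1 : g ≠ 1 := by rintro rfl; simp at hg
      have hp : IsPGroup 2 (Subgroup.zpowers g) :=
        IsPGroup.of_card (n := 1) (by rw [Nat.card_zpowers, hg, pow_one])
      obtain ⟨Q, hQ⟩ := hp.exists_le_sylow
      rw [Subgroup.zpowers_le] at hQ
      rw [Finset.card_eq_one]
      refine ⟨Q, ?_⟩
      ext R
      simp only [Finset.mem_bipartiteAbove, Finset.mem_univ, true_and, Finset.mem_singleton]
      constructor
      · intro hR
        exact Sylow.ext ((hQc R g hR hg1).trans (hQc Q g hQ hg1).symm)
      · rintro rfl; exact hQ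
    · intro Q _
      have : Finset.bipartiteBelow (fun (g : H) (Q : Sylow 2 H) => g ∈ Q)
          (Finset.univ.filter fun g : H => orderOf g = 2) Q =
          (Finset.univ.filter fun g : H => g ∈ (Q : Subgroup H)).erase 1 := by
        ext g
        simp only [Finset.mem_bipartiteBelow, Finset.mem_filter, Finset.mem_univ, true_and,
          Finset.mem_erase]
        constructor
        · rintro ⟨h1, h2⟩
          refine ⟨?_, h2⟩
          rintro rfl
          simp at h1
        · rintro ⟨h1, h2⟩
          exact ⟨hQord Q g h2 h1, h2⟩
      have h3 : (Finset.univ.filter fun g : H => g ∈ (Q : Subgroup H)).card = Nat.card Q := aux_card_filter _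
      rw [this, Finset.card_erase_of_mem (aux_one_mem_filter _), h3, hcard Q]
  obtain ⟨Q⟩ : Nonempty (Sylow 2 H) := inferInstance
  refine aux_alt_of_action (X := Sylow 2 H) 5 (by norm_num) hn5 ?_ (by rw [hN]; rfl)
  let K := (MulAction.toPermHom H (Sylow 2 H)).ker
  have hKmem : ∀ g : H, g ∈ K ↔ ∀ R : Sylow 2 H, g • R = R := by
    intro g
    rw [MonoidHom.mem_ker, Equiv.ext_iff]
    rfl
  have hKle : K ≤ Subgroup.normalizer (Q : Set H) := by
    intro g hg
    exact Sylow.smul_eq_iff_mem_normalizer.1 ((hKmem g).1 hg Q)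
  have hn12 : Nat.card (Subgroup.normalizer (Q : Set H)) = 12 := by
    have h1 := (Subgroup.normalizer (Q : Set H)).index_mul_card
    have h2 := Q.card_eq_index_normalizer
    rw [hn5] at h2
    rw [hN] at h1
    have h3 : (Subgroup.normalizer (Q : Set H)).index = 5 := h2.symm
    rw [h3] at h1
    omega
  have hKbot : K = ⊥ := by
    by_contra hne
    have h1 := hnormal K inferInstance hne
    have h2 := Subgroup.card_le_of_le hKle
    omega
  intro g hg
  have : g ∈ K := (hKmem g).2 hg
  rw [hKbot] at this
  exact this

lemma aux_class [Nontrivial H]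
    (hfix : ∀ g : H, g ≠ 1 → (MulAction.fixedBy P g).ncard = 2)
    (hstab : ∀ x : P, ∃ g : H, g ≠ 1 ∧ g • x = x)
    (horb : ∀ x : P, 3 ≤ (MulAction.orbit H x).ncard) :
    Nonempty (H ≃* alternatingGroup (Fin 4)) ∨ Nonempty (H ≃* Equiv.Perm (Fin 4)) ∨
      Nonempty (H ≃* alternatingGroup (Fin 5)) := by
  obtain ⟨a, b, c, hcov, ha, hb, ⟨hc, hN⟩ | ⟨hc, hN⟩ | ⟨hc, hN⟩⟩ := aux_count hfix hstab horb
  · exact Or.inl (aux_A4 hfix b hb hN)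
  · exact Or.inr (Or.inl (aux_S4 hfix horb b hb hN))
  · exact Or.inr (Or.inr (aux_A5 hfix a b c hcov ha hb hc hN))
end

lemma aux_fix_exists (g B : Matrix (Fin 3) (Fin 3) ℂ) (hd : g.det = 1) (hB : B.det ≠ 0)
    (hinv : gᵀ * B * g = B) : ∃ v : Fin 3 → ℂ, v ≠ 0 ∧ g *ᵥ v = v := by
  have h1 : (g - 1)ᵀ * B * g = -(B * (g - 1)) := by
    rw [transpose_sub, transpose_one, sub_mul, sub_mul, hinv, one_mul, mul_sub, mul_one]
    abel
  have h2 := congrArg Matrix.det h1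
  rw [det_mul, det_mul, det_transpose, hd, det_neg, det_mul] at h2
  have h3 : (g - 1).det = 0 := by
    have : (g - 1).det * B.det = 0 := by
      simp only [Fintype.card_fin] at h2
      linear_combination (1 / 2 : ℂ) * h2
    rcases mul_eq_zero.1 this with h | h
    · exact h
    · exact absurd h hB
  obtain ⟨v, hv, hv2⟩ := Matrix.exists_mulVec_eq_zero_iff.2 h3
  refine ⟨v, hv, ?_⟩
  rw [sub_mulVec, one_mulVec, sub_eq_zero] at hv2
  exact hv2

lemma aux_ker_im (g : Matrix (Fin 3) (Fin 3) ℂ) (n : ℕ) (hn : 0 < n) (hg : g ^ n = 1)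
    (u : Fin 3 → ℂ) (h : g *ᵥ (g *ᵥ u - u) = g *ᵥ u - u) : g *ᵥ u - u = 0 := by
  have key : ∀ k : ℕ, g ^ k *ᵥ u = u + (k : ℂ) • (g *ᵥ u - u) := by
    intro k
    induction k with
    | zero => simp
    | succ k ih =>
      rw [pow_succ', ← mulVec_mulVec, ih, mulVec_add, mulVec_smul, h]
      push_cast
      rw [add_smul, one_smul]
      abel
  have h1 := key n
  rw [hg, one_mulVec] at h1
  have h2 : (n : ℂ) • (g *ᵥ u - u) = 0 := by
    simpa using h1.symm
  rcases smul_eq_zero.1 h2 with h3 | h3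
  · exact absurd (Nat.cast_eq_zero.1 h3) hn.ne'
  · exact h3

lemma aux_fix_line (g : Matrix (Fin 3) (Fin 3) ℂ) (n : ℕ) (hn : 0 < n) (hg : g ^ n = 1)
    (hd : g.det = 1) (hg1 : g ≠ 1) (u v : Fin 3 → ℂ) (hu0 : u ≠ 0) (hu : g *ᵥ u = u)
    (hv : g *ᵥ v = v) : ∃ t : ℂ, v = t • u := by
  by_contra hcon
  apply hg1
  have key : ∀ w, g *ᵥ w = w := by
    intro w
    have h1 : (Matrix.of ![u, v, g *ᵥ w]) = Matrix.of ![u, v, w] * gᵀ := by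
      ext i j
      have e : ∀ z : Fin 3 → ℂ, (g *ᵥ z) j = ∑ k, z k * g j k := by
        intro z; simp [mulVec, dotProduct, mul_comm]
      fin_cases i
      · have := congrFun hu j
        rw [e] at this
        simp [Matrix.mul_apply, ← this]
      · have := congrFun hv j
        rw [e] at this
        simp [Matrix.mul_apply, ← this]
      · simp [Matrix.mul_apply, e]
    have h2 := congrArg Matrix.det h1
    rw [det_mul, det_transpose, hd, mul_one] at h2
    have h3 : (Matrix.of ![u, v, g *ᵥ w - w]).det = 0 := by
      rw [det_fin_three] at h2 ⊢
      rw [det_fin_three] at h2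
      simp at h2 ⊢
      linear_combination h2
    obtain ⟨c, hc0, hc⟩ := Matrix.exists_vecMul_eq_zero_iff.2 h3
    have hc' : c 0 • u + c 1 • v + c 2 • (g *ᵥ w - w) = 0 := by
      ext j
      have := congrFun hc j
      simpa [vecMul, dotProduct, Fin.sum_univ_three] using this
    by_cases h20 : c 2 = 0
    · rw [h20, zero_smul, add_zero] at hc'
      by_cases h10 : c 1 = 0
      · rw [h10, zero_smul, add_zero] at hc'
        rcases smul_eq_zero.1 hc' with h | h
        · exfalso; apply hc0
          ext i; fin_cases i
          · exact h
          · exact h10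
          · exact h20
        · exact absurd h hu0
      · exfalso
        apply hcon
        refine ⟨-(c 0 / c 1), ?_⟩
        have : c 1 • v = -(c 0 • u) := by rw [eq_neg_iff_add_eq_zero, add_comm]; exact hc'
        rw [← inv_smul_smul₀ h10 v, this, smul_neg, smul_smul, neg_smul, div_eq_inv_mul]
    · have hx : g *ᵥ w - w = (c 2)⁻¹ • (-(c 0 • u + c 1 • v)) := by
        rw [eq_inv_smul_iff₀ h20, eq_neg_iff_add_eq_zero, add_comm]; exact hc'
      have hfix : g *ᵥ (g *ᵥ w - w) = g *ᵥ w - w := by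
        rw [hx, mulVec_smul, mulVec_neg, mulVec_add, mulVec_smul, mulVec_smul, hu, hv]
      exact sub_eq_zero.1 (aux_ker_im g n hn hg w hfix)
  apply Matrix.toLin'.injective
  apply LinearMap.ext
  intro w
  simp [key w]

lemma aux_aniso (g B : Matrix (Fin 3) (Fin 3) ℂ) (n : ℕ) (hn : 0 < n) (hg : g ^ n = 1)
    (hd : g.det = 1) (hg1 : g ≠ 1) (hB : B.det ≠ 0)
    (hinv : gᵀ * B * g = B) (v : Fin 3 → ℂ) (hv0 : v ≠ 0) (hv : g *ᵥ v = v) :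
    v ⬝ᵥ B *ᵥ v ≠ 0 := by
  intro h0
  have hy : (v ᵥ* B) ᵥ* g = v ᵥ* B := by
    conv_rhs => rw [← hinv]
    rw [← vecMul_vecMul, ← vecMul_vecMul, vecMul_transpose, hv]
  have hyp : ∀ (k : ℕ) (w : Fin 3 → ℂ), (v ᵥ* B) ⬝ᵥ (g ^ k *ᵥ w) = (v ᵥ* B) ⬝ᵥ w := by
    intro k w
    induction k with
    | zero => simp
    | succ k ih => rw [pow_succ', ← mulVec_mulVec, dotProduct_mulVec, hy, ih]
  have hall : ∀ w, (v ᵥ* B) ⬝ᵥ w = 0 := by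
    intro w
    have hS : g *ᵥ (∑ i ∈ Finset.range n, g ^ i *ᵥ w) = ∑ i ∈ Finset.range n, g ^ i *ᵥ w := by
      have e1 : g *ᵥ (∑ i ∈ Finset.range n, g ^ i *ᵥ w) = ∑ i ∈ Finset.range n, g ^ (i + 1) *ᵥ w := by
        rw [← Matrix.mulVecLin_apply, map_sum]
        refine Finset.sum_congr rfl fun i _ => ?_
        rw [Matrix.mulVecLin_apply, mulVec_mulVec, pow_succ']
      have e2 := Finset.sum_range_succ (fun i => g ^ i *ᵥ w) n
      have e3 := Finset.sum_range_succ' (fun i => g ^ i *ᵥ w) n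
      rw [e1]
      rw [e2, hg, pow_zero] at e3
      exact (add_right_cancel e3).symm
    obtain ⟨t, ht⟩ := aux_fix_line g n hn hg hd hg1 v _ hv0 hv hS
    have h1 : (v ᵥ* B) ⬝ᵥ (∑ i ∈ Finset.range n, g ^ i *ᵥ w) = n * ((v ᵥ* B) ⬝ᵥ w) := by
      rw [dotProduct_sum, Finset.sum_congr rfl (fun i _ => hyp i w)]
      simp
    rw [ht, dotProduct_smul, ← dotProduct_mulVec, h0, smul_zero] at h1
    rcases mul_eq_zero.1 h1.symm with h | h
    · exact absurd (Nat.cast_eq_zero.1 h) hn.ne'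
    · exact h
  have hz : v ᵥ* B = 0 := dotProduct_eq_zero _ hall
  exact hB (Matrix.exists_vecMul_eq_zero_iff.1 ⟨v, hv0, hz⟩)

lemma aux_two_fix (g B : Matrix (Fin 3) (Fin 3) ℂ) (n : ℕ) (hn : 0 < n) (hg : g ^ n = 1)
    (hd : g.det = 1) (hg1 : g ≠ 1) (hB : B.det ≠ 0)
    (hinv : gᵀ * B * g = B) : ∃ v : Fin 3 → ℂ, v ≠ -v ∧
      {w : Fin 3 → ℂ | w ⬝ᵥ B *ᵥ w = 1 ∧ g *ᵥ w = w} = {v, -v} := by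
  obtain ⟨v, hv0, hv⟩ := aux_fix_exists g B hd hB hinv
  have hc := aux_aniso g B n hn hg hd hg1 hB hinv v hv0 hv
  obtain ⟨s, hs⟩ := IsAlgClosed.exists_pow_nat_eq (v ⬝ᵥ B *ᵥ v) (n := 2) two_pos
  have hs0 : s ≠ 0 := by
    rintro rfl
    apply hc; rw [← hs]; simp
  have hu0 : s⁻¹ • v ≠ 0 := smul_ne_zero (inv_ne_zero hs0) hv0
  have hu : g *ᵥ (s⁻¹ • v) = s⁻¹ • v := by rw [mulVec_smul, hv]
  have huB : (s⁻¹ • v) ⬝ᵥ B *ᵥ (s⁻¹ • v) = 1 := by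
    rw [mulVec_smul, smul_dotProduct, dotProduct_smul, ← hs, smul_eq_mul, smul_eq_mul]
    field_simp
  generalize s⁻¹ • v = u at *
  refine ⟨u, ?_, ?_⟩
  · intro h
    exact hu0 (self_eq_neg.1 h)
  · ext w
    simp only [Set.mem_ofPred_eq, Set.mem_insert_iff, Set.mem_singleton_iff]
    constructor
    · rintro ⟨h1, h2⟩
      obtain ⟨t, rfl⟩ := aux_fix_line g n hn hg hd hg1 u w hu0 hu h2
      rw [mulVec_smul, smul_dotProduct, dotProduct_smul, huB, smul_eq_mul, smul_eq_mul, mul_one] at h1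
      rcases mul_self_eq_one_iff.1 h1 with h | h
      · left; rw [h, one_smul]
      · right; rw [h, neg_smul, one_smul]
    · rintro (rfl | rfl)
      · exact ⟨huB, hu⟩
      · refine ⟨?_, ?_⟩
        · rw [mulVec_neg, neg_dotProduct_neg, huB]
        · rw [mulVec_neg, hu]

lemma aux_no_line {H : Type*} [Group H] (ρ : H →* Matrix (Fin 3) (Fin 3) ℂ)
    (hirr : ∀ W : Submodule ℂ (Fin 3 → ℂ),
      (∀ h : H, ∀ v ∈ W, ρ h *ᵥ v ∈ W) → W = ⊥ ∨ W = ⊤)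
    (v : Fin 3 → ℂ) (hv0 : v ≠ 0) (hv : ∀ h, ∃ t : ℂ, ρ h *ᵥ v = t • v) : False := by
  have hW : ∀ h : H, ∀ w ∈ Submodule.span ℂ {v}, ρ h *ᵥ w ∈ Submodule.span ℂ {v} := by
    intro h w hw
    obtain ⟨a, rfl⟩ := Submodule.mem_span_singleton.1 hw
    obtain ⟨t, ht⟩ := hv h
    rw [mulVec_smul, ht]
    exact Submodule.smul_mem _ _ (Submodule.smul_mem _ _ (Submodule.mem_span_singleton_self v))
  rcases hirr (Submodule.span ℂ {v}) hW with h | h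
  · exact hv0 (Submodule.span_singleton_eq_bot.1 h)
  · have h1 := finrank_span_singleton (K := ℂ) hv0
    rw [h, finrank_top] at h1
    simp at h1

lemma aux_geo {H : Type*} [Group H] [Finite H] (ρ : H →* Matrix (Fin 3) (Fin 3) ℂ)
    (hinj : ∀ h, ρ h = 1 → h = 1) (hdet : ∀ h, (ρ h).det = 1)
    (B : Matrix (Fin 3) (Fin 3) ℂ) (hB : B.det ≠ 0) (hinv : ∀ h, (ρ h)ᵀ * B * ρ h = B)
    (hirr : ∀ W : Submodule ℂ (Fin 3 → ℂ),
      (∀ h : H, ∀ v ∈ W, ρ h *ᵥ v ∈ W) → W = ⊥ ∨ W = ⊤) :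
    Nonempty (H ≃* alternatingGroup (Fin 4)) ∨ Nonempty (H ≃* Equiv.Perm (Fin 4)) ∨
      Nonempty (H ≃* alternatingGroup (Fin 5)) := by
  have hnt : Nontrivial H := by
    by_contra hcon
    rw [not_nontrivial_iff_subsingleton] at hcon
    refine aux_no_line ρ hirr (fun _ => 1) (fun h => one_ne_zero (congrFun h 0)) ?_
    intro h
    refine ⟨1, ?_⟩
    rw [Subsingleton.elim h 1, map_one, one_mulVec, one_smul]
  have h2 : ∀ h : H, h ≠ 1 → ∃ v : Fin 3 → ℂ, v ≠ -v ∧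
      {w : Fin 3 → ℂ | w ⬝ᵥ B *ᵥ w = 1 ∧ ρ h *ᵥ w = w} = {v, -v} := by
    intro h hh
    refine aux_two_fix (ρ h) B (Nat.card H) Nat.card_pos ?_ (hdet h) (fun e => hh (hinj h e)) hB (hinv h)
    rw [← map_pow, pow_card_eq_one', map_one]
  have hq : ∀ h v, (ρ h *ᵥ v) ⬝ᵥ B *ᵥ (ρ h *ᵥ v) = v ⬝ᵥ B *ᵥ v := by
    intro h v
    conv_rhs => rw [← hinv h]
    rw [← mulVec_mulVec, ← mulVec_mulVec, dotProduct_mulVec v, vecMul_transpose]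
  let S : Set (Fin 3 → ℂ) := {v | v ⬝ᵥ B *ᵥ v = 1 ∧ ∃ h, h ≠ 1 ∧ ρ h *ᵥ v = v}
  have hSfin : S.Finite := by
    refine Set.Finite.subset (Set.finite_iUnion (fun h : {h : H // h ≠ 1} =>
      (?_ : {w : Fin 3 → ℂ | w ⬝ᵥ B *ᵥ w = 1 ∧ ρ h *ᵥ w = w}.Finite))) ?_
    · obtain ⟨v, _, e⟩ := h2 h.1 h.2
      rw [e]; exact Set.toFinite _
    · rintro v ⟨h1, h, hh, hv⟩
      exact Set.mem_iUnion.2 ⟨⟨h, hh⟩, h1, hv⟩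
  have : Finite S := hSfin
  have hSinv : ∀ (h : H) (v : S), ρ h *ᵥ v.1 ∈ S := by
    rintro h ⟨v, h1, k, hk, hv⟩
    refine ⟨by rw [hq]; exact h1, h * k * h⁻¹, fun e => hk (by simpa using e), ?_⟩
    rw [mulVec_mulVec, ← map_mul, inv_mul_cancel_right, map_mul, ← mulVec_mulVec]
    exact congrArg (ρ h *ᵥ ·) hv
  let act : MulAction H S :=
    { smul := fun h v => ⟨ρ h *ᵥ v.1, hSinv h v⟩
      one_smul := fun v => Subtype.ext (by
        change ρ 1 *ᵥ v.1 = v.1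
        rw [map_one, one_mulVec])
      mul_smul := fun h k v => Subtype.ext (by
        change ρ (h * k) *ᵥ v.1 = ρ h *ᵥ (ρ k *ᵥ v.1)
        rw [map_mul, mulVec_mulVec]) }
  have hact : ∀ (h : H) (v : S), (h • v).1 = ρ h *ᵥ v.1 := fun _ _ => rfl
  refine aux_class (P := S) ?_ ?_ ?_
  · intro h hh
    obtain ⟨v, hv, e⟩ := h2 h hh
    rw [← Set.ncard_image_of_injective _ Subtype.val_injective, ← Set.ncard_pair hv, ← e]
    congr 1
    ext w
    constructor
    · rintro ⟨x, hx, rfl⟩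
      exact ⟨x.2.1, congrArg Subtype.val hx⟩
    · rintro ⟨h1, h3⟩
      exact ⟨⟨w, h1, h, hh, h3⟩, Subtype.ext h3, rfl⟩
  · rintro ⟨v, h1, h, hh, hv⟩
    exact ⟨h, hh, Subtype.ext hv⟩
  · intro x
    have hne0 : ∀ y : S, y.1 ≠ 0 := by
      intro y hy
      have := y.2.1
      rw [hy] at this
      simp at this
    by_contra hlt
    have hpos : 0 < (MulAction.orbit H x).ncard := by
      rw [Set.ncard_pos]; exact MulAction.nonempty_orbit x
    rcases (by omega : (MulAction.orbit H x).ncard = 1 ∨ (MulAction.orbit H x).ncard = 2) with h1 | h1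
    · obtain ⟨y, hy⟩ := Set.ncard_eq_one.1 h1
      refine aux_no_line ρ hirr x.1 (hne0 x) fun h => ⟨1, ?_⟩
      have e1 : x ∈ ({y} : Set S) := hy ▸ MulAction.mem_orbit_self x
      have e2 : h • x ∈ ({y} : Set S) := hy ▸ MulAction.mem_orbit x h
      rw [one_smul, ← hact, Set.mem_singleton_iff.1 e2, Set.mem_singleton_iff.1 e1]
    · obtain ⟨y, z, hyz, hO⟩ := Set.ncard_eq_two.1 h1
      have hyO : y ∈ MulAction.orbit H x := by rw [hO]; simp
      have hzO : z ∈ MulAction.orbit H x := by rw [hO]; simp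
      have hmem : ∀ w, w ∈ MulAction.orbit H x → ∀ h : H, h • w = y ∨ h • w = z := by
        intro w hw h
        have : h • w ∈ MulAction.orbit H x := by
          obtain ⟨k, rfl⟩ := hw
          exact ⟨h * k, mul_smul _ _ _⟩
        rw [hO] at this
        simpa using this
      by_cases hs : y.1 + z.1 = 0
      · refine aux_no_line ρ hirr y.1 (hne0 y) fun h => ?_
        rcases hmem y hyO h with e | e
        · exact ⟨1, by rw [one_smul, ← hact, e]⟩
        · exact ⟨-1, by rw [neg_smul, one_smul, ← hact, e, eq_neg_iff_add_eq_zero, add_comm]; exact hs⟩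
      · refine aux_no_line ρ hirr _ hs fun h => ⟨1, ?_⟩
        rw [one_smul, mulVec_add, ← hact, ← hact]
        have hne : h • y ≠ h • z := fun e => hyz (smul_left_cancel h e)
        rcases hmem y hyO h with e | e <;> rcases hmem z hzO h with e' | e'
        · exact absurd (e.trans e'.symm) hne
        · rw [e, e']
        · rw [e, e', add_comm]
        · exact absurd (e.trans e'.symm) hne

lemma aux_deg_one (f : MvPolynomial (Fin 3) ℂ) (hf : f.IsHomogeneous 1) :
    ∃ a : Fin 3 → ℂ, ∀ v, MvPolynomial.eval v f = a ⬝ᵥ v := by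
  have key : ∀ s : Finset (Fin 3 →₀ ℕ), s ⊆ f.support → ∃ a : Fin 3 → ℂ, ∀ v,
      MvPolynomial.eval v (∑ m ∈ s, MvPolynomial.monomial m (f.coeff m)) = a ⬝ᵥ v := by
    intro s
    induction s using Finset.induction_on with
    | empty => intro _; exact ⟨0, fun v => by simp⟩
    | insert m s hm ih =>
      intro hs
      obtain ⟨a, ha⟩ := ih (fun x hx => hs (Finset.mem_insert_of_mem hx))
      have hdeg : m.degree = 1 := by
        have h1 := hf (MvPolynomial.mem_support_iff.1 (hs (Finset.mem_insert_self m s)))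
        rw [Finsupp.degree_eq_weight_one]
        exact h1
      obtain ⟨i, hi⟩ : ∃ i, Finsupp.toMultiset m = {i} := by
        rw [← Multiset.card_eq_one, Finsupp.card_toMultiset]
        exact hdeg
      refine ⟨a + Pi.single i (f.coeff m), fun v => ?_⟩
      have hm' : m = Finsupp.single i 1 := by
        rw [← Finsupp.toMultiset_toFinsupp m, hi, Multiset.toFinsupp_singleton]
      rw [Finset.sum_insert hm, map_add, ha, add_dotProduct, single_dotProduct, add_comm]
      congr 1
      have e : MvPolynomial.monomial m (f.coeff m) =
          MvPolynomial.C (f.coeff m) * MvPolynomial.X i := by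
        rw [MvPolynomial.X, MvPolynomial.C_mul_monomial, ← hm', mul_one]
      rw [e]
      simp
  obtain ⟨a, ha⟩ := key f.support (Finset.Subset.refl _)
  refine ⟨a, fun v => ?_⟩
  rw [← ha v, ← MvPolynomial.as_sum f]

lemma aux_deg_two (f : MvPolynomial (Fin 3) ℂ) (hf : f.IsHomogeneous 2) :
    ∃ A : Matrix (Fin 3) (Fin 3) ℂ, ∀ v, MvPolynomial.eval v f = v ⬝ᵥ A *ᵥ v := by
  have key : ∀ s : Finset (Fin 3 →₀ ℕ), s ⊆ f.support → ∃ A : Matrix (Fin 3) (Fin 3) ℂ, ∀ v,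
      MvPolynomial.eval v (∑ m ∈ s, MvPolynomial.monomial m (f.coeff m)) = v ⬝ᵥ A *ᵥ v := by
    intro s
    induction s using Finset.induction_on with
    | empty => intro _; exact ⟨0, fun v => by simp⟩
    | insert m s hm ih =>
      intro hs
      obtain ⟨A, hA⟩ := ih (fun x hx => hs (Finset.mem_insert_of_mem hx))
      have hdeg : m.degree = 2 := by
        have h1 := hf (MvPolynomial.mem_support_iff.1 (hs (Finset.mem_insert_self m s)))
        rw [Finsupp.degree_eq_weight_one]
        exact h1
      obtain ⟨i, j, hi⟩ : ∃ i j, Finsupp.toMultiset m = {i, j} := by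
        rw [← Multiset.card_eq_two, Finsupp.card_toMultiset]
        exact hdeg
      refine ⟨A + Matrix.single i j (f.coeff m), fun v => ?_⟩
      have hm' : m = Finsupp.single i 1 + Finsupp.single j 1 := by
        rw [← Finsupp.toMultiset_toFinsupp m, hi, Multiset.insert_eq_cons, ← Multiset.singleton_add,
          map_add, Multiset.toFinsupp_singleton, Multiset.toFinsupp_singleton]
      rw [Finset.sum_insert hm, map_add, hA, add_mulVec, dotProduct_add, add_comm]
      congr 1
      have e : MvPolynomial.monomial m (f.coeff m) =
          MvPolynomial.C (f.coeff m) * (MvPolynomial.X i * MvPolynomial.X j) := by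
        conv_lhs => rw [hm']
        rw [MvPolynomial.X, MvPolynomial.X, MvPolynomial.monomial_mul, MvPolynomial.C_mul_monomial,
          ← hm']
        simp
      rw [e]
      have e2 : Matrix.single i j (f.coeff m) *ᵥ v = Pi.single i (f.coeff m * v j) := by
        rw [Matrix.single_mulVec]; rfl
      rw [e2, dotProduct_single]
      simp
      ring
  obtain ⟨a, ha⟩ := key f.support (Finset.Subset.refl _)
  refine ⟨a, fun v => ?_⟩
  rw [← ha v, ← MvPolynomial.as_sum f]

/-- If a finite irreducible subgroup `G ≤ SL(3, ℂ)` has a nonzero homogeneous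
semi-invariant `f` of degree at most 2, then `f` has degree exactly 2, `f` is a nondegenerate
quadratic form, and the image `Ḡ` of `G` in `PGL(3, ℂ)` is dihedral of order `2n` (`n ≥ 2`),
`A₄`, `S₄` or `A₅`. -/
theorem stmt_4 (G : Subgroup (SpecialLinearGroup (Fin 3) ℂ)) (hGfin : Finite G)
    (hirr : ∀ W : Submodule ℂ (Fin 3 → ℂ),
      (∀ g ∈ G, ∀ v ∈ W, Matrix.mulVec (g : Matrix (Fin 3) (Fin 3) ℂ) v ∈ W) →
      W = ⊥ ∨ W = ⊤)
    (f : MvPolynomial (Fin 3) ℂ) (d : ℕ) (hd1 : 1 ≤ d) (hd2 : d ≤ 2)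
    (hf0 : f ≠ 0) (hfhom : f.IsHomogeneous d)
    (hsemi : ∃ χ : G →* ℂˣ, ∀ (g : G) (v : Fin 3 → ℂ),
      MvPolynomial.eval
          (Matrix.mulVec
            (((g : SpecialLinearGroup (Fin 3) ℂ)⁻¹ : SpecialLinearGroup (Fin 3) ℂ) :
              Matrix (Fin 3) (Fin 3) ℂ) v) f
        = (χ g : ℂ) * MvPolynomial.eval v f)
    (Gbar : Subgroup (GL (Fin 3) ℂ ⧸ Subgroup.center (GL (Fin 3) ℂ)))
    (hGbar : Gbar = Subgroup.map
      ((QuotientGroup.mk' (Subgroup.center (GL (Fin 3) ℂ))).comp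
        SpecialLinearGroup.toGL) G) :
    d = 2 ∧
    (∀ v : Fin 3 → ℂ,
      (∀ w : Fin 3 → ℂ,
        MvPolynomial.eval (v + w) f = MvPolynomial.eval v f + MvPolynomial.eval w f) →
      v = 0) ∧
    ((∃ n, 2 ≤ n ∧ Nonempty (Gbar ≃* DihedralGroup n)) ∨
      Nonempty (Gbar ≃* alternatingGroup (Fin 4)) ∨
      Nonempty (Gbar ≃* Equiv.Perm (Fin 4)) ∨
      Nonempty (Gbar ≃* alternatingGroup (Fin 5))) := by
  obtain ⟨χ, hχ⟩ := hsemi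
  -- the form `f` under `g` itself
  have hχ' : ∀ (g : G) (v : Fin 3 → ℂ), MvPolynomial.eval v f =
      (χ g : ℂ) * MvPolynomial.eval ((g : SpecialLinearGroup (Fin 3) ℂ).1 *ᵥ v) f := by
    intro g v
    rw [← hχ g, mulVec_mulVec]
    have : ((g : SpecialLinearGroup (Fin 3) ℂ)⁻¹ : SpecialLinearGroup (Fin 3) ℂ).1 *
        (g : SpecialLinearGroup (Fin 3) ℂ).1 = 1 :=
      congrArg Subtype.val (inv_mul_cancel (g : SpecialLinearGroup (Fin 3) ℂ))
    rw [this, one_mulVec]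
  obtain ⟨v₁, hv₁⟩ : ∃ v, MvPolynomial.eval v f ≠ 0 := by
    by_contra hcon
    push Not at hcon
    exact hf0 (MvPolynomial.funext fun v => by rw [hcon v, map_zero])
  have hd : d = 2 := by
    by_contra hne
    obtain rfl : d = 1 := by omega
    obtain ⟨a, ha⟩ := aux_deg_one f hfhom
    let φ : (Fin 3 → ℂ) →ₗ[ℂ] ℂ := dotProductBilin ℂ ℂ a
    have hφ : ∀ v, φ v = a ⬝ᵥ v := fun v => rfl
    rcases hirr (LinearMap.ker φ) (by
      intro g hg v hv
      rw [LinearMap.mem_ker, hφ, ← ha] at hv ⊢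
      have := hχ' ⟨g, hg⟩ v
      rw [hv] at this
      rcases mul_eq_zero.1 this.symm with h | h
      · exact absurd h (Units.ne_zero _)
      · exact h) with h | h
    · have h1 := LinearMap.finrank_range_add_finrank_ker φ
      have h2 := Submodule.finrank_le (LinearMap.range φ)
      rw [h, finrank_bot] at h1
      simp at h1 h2
      omega
    · have : v₁ ∈ LinearMap.ker φ := h ▸ Submodule.mem_top
      rw [LinearMap.mem_ker, hφ, ← ha] at this
      exact hv₁ this
  subst hd
  obtain ⟨A, hA⟩ := aux_deg_two f hfhom
  let B := A + Aᵀ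
  have hBsymm : Bᵀ = B := by
    simp only [B, transpose_add, transpose_transpose]; abel
  have hAt : ∀ v w : Fin 3 → ℂ, v ⬝ᵥ Aᵀ *ᵥ w = w ⬝ᵥ A *ᵥ v := by
    intro v w
    rw [mulVec_transpose, dotProduct_comm, dotProduct_mulVec]
  have hpol : ∀ v w, MvPolynomial.eval (v + w) f =
      MvPolynomial.eval v f + MvPolynomial.eval w f + v ⬝ᵥ B *ᵥ w := by
    intro v w
    simp only [hA, B, add_mulVec, mulVec_add, dotProduct_add, add_dotProduct, hAt]
    ring
  have hself : ∀ v, v ⬝ᵥ B *ᵥ v = 2 * MvPolynomial.eval v f := by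
    intro v
    simp only [hA, B, add_mulVec, dotProduct_add, hAt]
    ring
  have hBg : ∀ (g : G) (v w : Fin 3 → ℂ), v ⬝ᵥ B *ᵥ w =
      (χ g : ℂ) * ((g.1.1 *ᵥ v) ⬝ᵥ B *ᵥ (g.1.1 *ᵥ w)) := by
    intro g v w
    have h1 := hpol v w
    have h2 := hpol (g.1.1 *ᵥ v) (g.1.1 *ᵥ w)
    rw [← mulVec_add] at h2
    rw [hχ' g (v + w), hχ' g v, hχ' g w] at h1
    linear_combination (χ g : ℂ) * h2 - h1
  have hrad : ∀ v : Fin 3 → ℂ, (∀ w, v ⬝ᵥ B *ᵥ w = 0) → v = 0 := by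
    let W : Submodule ℂ (Fin 3 → ℂ) :=
      { carrier := {v | ∀ w, v ⬝ᵥ B *ᵥ w = 0}
        add_mem' := fun {a b} ha hb w => by rw [add_dotProduct, ha w, hb w, add_zero]
        zero_mem' := fun w => zero_dotProduct _
        smul_mem' := fun c a ha w => by rw [smul_dotProduct, ha w, smul_zero] }
    have hW : ∀ g ∈ G, ∀ v ∈ W, Matrix.mulVec (g : Matrix (Fin 3) (Fin 3) ℂ) v ∈ W := by
      intro g hg v hv w
      have h1 := hBg ⟨g, hg⟩ v ((g⁻¹ : SpecialLinearGroup (Fin 3) ℂ).1 *ᵥ w)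
      have e : g.1 *ᵥ ((g⁻¹ : SpecialLinearGroup (Fin 3) ℂ).1 *ᵥ w) = w := by
        have hm : g.1 * (g⁻¹ : SpecialLinearGroup (Fin 3) ℂ).1 = 1 :=
          congrArg Subtype.val (mul_inv_cancel g)
        rw [mulVec_mulVec, hm, one_mulVec]
      rw [hv _] at h1
      simp only [e] at h1
      rcases mul_eq_zero.1 h1.symm with h | h
      · exact absurd h (Units.ne_zero _)
      · exact h
    intro v hv
    rcases hirr W hW with h | h
    · have : v ∈ W := hv
      rw [h] at this
      exact this
    · have : v₁ ∈ W := h ▸ Submodule.mem_top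
      have h1 := this v₁
      rw [hself] at h1
      exact absurd (by simpa using h1) hv₁
  refine ⟨rfl, ?_, Or.inr ?_⟩
  · intro v hv
    refine hrad v fun w => ?_
    have := hpol v w
    rw [hv w] at this
    simpa using this
  have hBdet : B.det ≠ 0 := by
    intro h
    obtain ⟨v, hv0, hv⟩ := Matrix.exists_vecMul_eq_zero_iff.2 h
    exact hv0 (hrad v fun w => by rw [dotProduct_mulVec, hv, zero_dotProduct])
  have hBm : ∀ g : G, B = (χ g : ℂ) • (g.1.1ᵀ * B * g.1.1) := by
    intro g
    ext i j
    have h1 := hBg g (Pi.single i 1) (Pi.single j 1)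
    have e : (g.1.1 *ᵥ Pi.single i 1) ⬝ᵥ B *ᵥ (g.1.1 *ᵥ Pi.single j 1) =
        (Pi.single i 1) ⬝ᵥ (g.1.1ᵀ * B * g.1.1) *ᵥ (Pi.single j 1) := by
      rw [← mulVec_mulVec, ← mulVec_mulVec, dotProduct_mulVec (Pi.single i 1), vecMul_transpose]
    rw [e] at h1
    simpa using h1
  have hχ3 : ∀ g : G, (χ g : ℂ) ^ 3 = 1 := by
    intro g
    have h1 := congrArg Matrix.det (hBm g)
    rw [det_smul, det_mul, det_mul, det_transpose, g.1.2] at h1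
    simp only [Fintype.card_fin, one_mul, mul_one] at h1
    have h2 : B.det * ((χ g : ℂ) ^ 3 - 1) = 0 := by linear_combination -h1
    rcases mul_eq_zero.1 h2 with h | h
    · exact absurd h hBdet
    · exact sub_eq_zero.1 h
  -- the rescaled representation
  let φ : G →* Matrix (Fin 3) (Fin 3) ℂ :=
    { toFun := fun g => ((χ g : ℂ) ^ 2) • g.1.1
      map_one' := by simp
      map_mul' := fun g h => by
        simp only [map_mul, Units.val_mul, Subgroup.coe_mul]
        rw [smul_mul_smul_comm, mul_pow]
        rfl }
  have hφ : ∀ g, φ g = ((χ g : ℂ) ^ 2) • g.1.1 := fun _ => rfl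
  have hφdet : ∀ g, (φ g).det = 1 := by
    intro g
    rw [hφ, det_smul, g.1.2, Fintype.card_fin, mul_one, ← pow_mul, mul_comm, pow_mul, hχ3, one_pow]
  have hφinv : ∀ g, (φ g)ᵀ * B * φ g = B := by
    intro g
    conv_rhs => rw [hBm g]
    rw [hφ, transpose_smul, smul_mul_assoc, smul_mul_assoc, mul_smul_comm, smul_smul]
    congr 1
    linear_combination (χ g : ℂ) * hχ3 g
  have hφirr : ∀ W : Submodule ℂ (Fin 3 → ℂ),
      (∀ g : G, ∀ v ∈ W, φ g *ᵥ v ∈ W) → W = ⊥ ∨ W = ⊤ := by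
    intro W hW
    refine hirr W fun g hg v hv => ?_
    have h1 := hW ⟨g, hg⟩ v hv
    rw [hφ, smul_mulVec] at h1
    have hne : ((χ ⟨g, hg⟩ : ℂ) ^ 2) ≠ 0 := pow_ne_zero _ (Units.ne_zero _)
    exact (W.smul_mem_iff hne).1 h1
  -- `Gbar` is the quotient of `G` by the kernel of `φ`
  let π : G →* Gbar := ((((QuotientGroup.mk' (Subgroup.center (GL (Fin 3) ℂ))).comp
        SpecialLinearGroup.toGL).comp G.subtype).codRestrict Gbar (by
          intro g; rw [hGbar]; exact ⟨g.1, g.2, rfl⟩))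
  have hπsurj : Function.Surjective π := by
    rintro ⟨x, hx⟩
    have hx' := hx
    rw [hGbar] at hx'
    obtain ⟨g, hg, e⟩ := hx'
    exact ⟨⟨g, hg⟩, Subtype.ext e⟩
  have hker : ∀ g : G, π g = 1 ↔ φ g = 1 := by
    intro g
    have h1 : π g = 1 ↔ SpecialLinearGroup.toGL g.1 ∈ Subgroup.center (GL (Fin 3) ℂ) := by
      rw [Subtype.ext_iff, ← QuotientGroup.eq_one_iff]
      rfl
    rw [h1, GeneralLinearGroup.center_eq_range_scalar]
    constructor
    · rintro ⟨c, hc⟩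
      have hg : g.1.1 = (c : ℂ) • (1 : Matrix (Fin 3) (Fin 3) ℂ) := by
        have := congrArg (fun x : GL (Fin 3) ℂ => x.1) hc
        rw [smul_one_eq_diagonal]
        exact this.symm
      have h2 := hφinv g
      have h3 := hφdet g
      rw [hφ, hg, smul_smul] at h2 h3
      rw [hφ, hg, smul_smul]
      generalize (χ g : ℂ) ^ 2 * (c : ℂ) = t at *
      rw [det_smul, det_one, Fintype.card_fin, mul_one] at h3
      rw [transpose_smul, transpose_one, smul_mul_assoc, smul_mul_assoc, one_mul, mul_smul_comm,
        mul_one, smul_smul] at h2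
      have h4 := congrArg Matrix.det h2
      rw [det_smul, Fintype.card_fin] at h4
      have h5 : t * t = 1 := by
        by_contra hne
        have : (t * t - 1) • B = 0 := by rw [sub_smul, one_smul, h2, sub_self]
        rcases smul_eq_zero.1 this with h | h
        · exact hne (sub_eq_zero.1 h)
        · rw [h] at hBdet
          exact hBdet det_zero
      have : t = 1 := by linear_combination h3 - t * h5
      rw [this, one_smul]
    · intro h
      have hne : ((χ g : ℂ) ^ 2) ≠ 0 := pow_ne_zero _ (Units.ne_zero _)
      refine ⟨(Units.mk0 _ hne)⁻¹, ?_⟩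
      apply Units.ext
      have h2 : g.1.1 = ((χ g : ℂ) ^ 2)⁻¹ • (1 : Matrix (Fin 3) (Fin 3) ℂ) := by
        rw [← h, hφ, inv_smul_smul₀ hne]
      change _ = g.1.1
      rw [h2, smul_one_eq_diagonal]
      rfl
  -- descend `φ` to `Gbar`
  let ρ : Gbar →* Matrix (Fin 3) (Fin 3) ℂ :=
    (QuotientGroup.lift π.ker φ (fun g hg => (hker g).1 hg)).comp
      (QuotientGroup.quotientKerEquivOfSurjective π hπsurj).symm.toMonoidHom
  have hρ : ∀ g, ρ (π g) = φ g := by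
    intro g
    have : (QuotientGroup.quotientKerEquivOfSurjective π hπsurj).symm (π g) = (g : G ⧸ π.ker) := by
      rw [MulEquiv.symm_apply_eq]; rfl
    change QuotientGroup.lift π.ker φ (fun g hg => (hker g).1 hg)
      ((QuotientGroup.quotientKerEquivOfSurjective π hπsurj).symm (π g)) = _
    rw [this]; rfl
  have : Finite Gbar := Finite.of_surjective π hπsurj
  refine aux_geo ρ ?_ ?_ B hBdet ?_ ?_
  · intro x
    obtain ⟨g, rfl⟩ := hπsurj x
    rw [hρ]; exact (hker g).2
  · intro x
    obtain ⟨g, rfl⟩ := hπsurj x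
    rw [hρ]; exact hφdet g
  · intro x
    obtain ⟨g, rfl⟩ := hπsurj x
    rw [hρ]; exact hφinv g
  · intro W hW
    refine hφirr W fun g v hv => ?_
    rw [← hρ]
    exact hW _ v hv
end

section
/- Let G be a finite subgroup of SL(3,ℂ) acting irreducibly on ℂ³. Then G has a nonzero semi-invariant homogeneous polynomial of degree at most 2 if and only if Ḡ, the image of G in PGL(3,ℂ), is isomorphic to the alternating group A₄, to the symmetric group S₄, or to the alternating group A₅. -/
open Matrix

section Combinatorics

open MulAction


lemma num_sorted (N a b c p q r : ℕ) (ha : a * p = N) (hb : b * q = N) (hc : c * r = N)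
    (ha2 : 2 ≤ a) (hab : a ≤ b) (hbc : b ≤ c) (hr : 3 ≤ r)
    (h : p + q + r = N + 2) :
    N = 12 ∨ N = 24 ∨ (N = 60 ∧ a = 2 ∧ b = 3 ∧ c = 5) := by
  have ha3 : a < 3 := by
    by_contra hcon
    push Not at hcon
    have h1 : 3 * p ≤ N := by rw [← ha]; exact Nat.mul_le_mul_right _ hcon
    have h2 : 3 * q ≤ N := by rw [← hb]; exact Nat.mul_le_mul_right _ (by omega)
    have h3 : 3 * r ≤ N := by rw [← hc]; exact Nat.mul_le_mul_right _ (by omega)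
    omega
  obtain rfl : a = 2 := by omega
  have hb4 : b < 4 := by
    by_contra hcon
    push Not at hcon
    have h2 : 4 * q ≤ N := by rw [← hb]; exact Nat.mul_le_mul_right _ (by omega)
    have h3 : 4 * r ≤ N := by rw [← hc]; exact Nat.mul_le_mul_right _ (by omega)
    omega
  have hc6 : c < 6 := by
    by_contra hcon
    push Not at hcon
    have h3 : 6 * r ≤ N := by rw [← hc]; exact Nat.mul_le_mul_right _ (by omega)
    interval_cases b <;> omega
  interval_cases b <;> interval_cases c <;> omega

lemma num3 (N a b c p q r : ℕ) (ha : a * p = N) (hb : b * q = N) (hc : c * r = N)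
    (ha2 : 2 ≤ a) (hb2 : 2 ≤ b) (hc2 : 2 ≤ c) (hp : 3 ≤ p) (hq : 3 ≤ q) (hr : 3 ≤ r)
    (h : p + q + r = N + 2) :
    N = 12 ∨ N = 24 ∨ (N = 60 ∧ ((a = 2 ∧ b = 3 ∧ c = 5) ∨ (a = 2 ∧ b = 5 ∧ c = 3) ∨
      (a = 3 ∧ b = 2 ∧ c = 5) ∨ (a = 3 ∧ b = 5 ∧ c = 2) ∨ (a = 5 ∧ b = 2 ∧ c = 3) ∨
      (a = 5 ∧ b = 3 ∧ c = 2))) := by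
  rcases le_total a b with h1 | h1 <;> rcases le_total b c with h2 | h2 <;>
    rcases le_total a c with h3 | h3
  · have := num_sorted N a b c p q r ha hb hc ha2 h1 h2 hr (by omega)
    exact this.imp id (Or.imp id fun ⟨h, x, y, z⟩ => ⟨h, by simp [x, y, z]⟩)
  · have := num_sorted N a b c p q r ha hb hc ha2 h1 h2 hr (by omega)
    exact this.imp id (Or.imp id fun ⟨h, x, y, z⟩ => ⟨h, by simp [x, y, z]⟩)
  · have := num_sorted N a c b p r q ha hc hb ha2 h3 h2 hq (by omega)
    exact this.imp id (Or.imp id fun ⟨h, x, y, z⟩ => ⟨h, by simp [x, y, z]⟩)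
  · have := num_sorted N c a b r p q hc ha hb hc2 h3 h1 hq (by omega)
    exact this.imp id (Or.imp id fun ⟨h, x, y, z⟩ => ⟨h, by simp [x, y, z]⟩)
  · have := num_sorted N b a c q p r hb ha hc hb2 h1 h3 hr (by omega)
    exact this.imp id (Or.imp id fun ⟨h, x, y, z⟩ => ⟨h, by simp [x, y, z]⟩)
  · have := num_sorted N b c a q r p hb hc ha hb2 h2 h3 hp (by omega)
    exact this.imp id (Or.imp id fun ⟨h, x, y, z⟩ => ⟨h, by simp [x, y, z]⟩)
  · have := num_sorted N c b a r q p hc hb ha hc2 h2 h1 hp (by omega)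
    exact this.imp id (Or.imp id fun ⟨h, x, y, z⟩ => ⟨h, by simp [x, y, z]⟩)
  · have := num_sorted N c b a r q p hc hb ha hc2 h2 h1 hp (by omega)
    exact this.imp id (Or.imp id fun ⟨h, x, y, z⟩ => ⟨h, by simp [x, y, z]⟩)

lemma num_orbits {Ω : Type*} [Fintype Ω] (N : ℕ) (hN : 2 ≤ N) (n o : Ω → ℕ)
    (hno : ∀ w, n w * o w = N) (hn : ∀ w, 2 ≤ n w) (ho : ∀ w, 3 ≤ o w)
    (hsum : ∑ w, o w + 2 * (N - 1) = Fintype.card Ω * N) :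
    N = 12 ∨ N = 24 ∨ (N = 60 ∧ (∀ w, n w = 2 ∨ n w = 3 ∨ n w = 5) ∧
      ∀ w w', n w = 2 → n w' = 2 → w = w') := by
  have hb : ∀ w, 2 * o w ≤ N := fun w => by
    rw [← hno w]; exact Nat.mul_le_mul_right _ (hn w)
  have h1 : 2 * ∑ w, o w ≤ Fintype.card Ω * N := by
    rw [Finset.mul_sum]
    calc _ ≤ ∑ _w : Ω, N := Finset.sum_le_sum fun w _ => hb w
      _ = _ := by simp
  have h3 : Fintype.card Ω < 4 := by
    by_contra hcon
    push Not at hcon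
    have : 4 * N ≤ Fintype.card Ω * N := Nat.mul_le_mul_right _ hcon
    omega
  obtain ⟨k, hk⟩ : ∃ k, Fintype.card Ω = k := ⟨_, rfl⟩
  have e : Fin k ≃ Ω := (Fintype.equivFinOfCardEq hk).symm
  rw [hk] at hsum h3
  rw [← e.sum_comp] at hsum
  interval_cases k
  · simp at hsum; omega
  · simp at hsum
    have := ho (e 0); have := hb (e 0); omega
  · simp [Fin.sum_univ_two] at hsum
    have := ho (e 0); have := ho (e 1); omega
  · simp only [Fin.sum_univ_three] at hsum
    have := num3 N _ _ _ _ _ _ (hno (e 0)) (hno (e 1)) (hno (e 2)) (hn _) (hn _) (hn _) (ho _)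
      (ho _) (ho _) (by omega)
    refine this.imp id (Or.imp id ?_)
    rintro ⟨h, hh⟩
    refine ⟨h, ?_, ?_⟩
    · intro w
      obtain ⟨i, rfl⟩ := e.surjective w
      fin_cases i <;> simp <;> omega
    · intro w w'
      obtain ⟨i, rfl⟩ := e.surjective w
      obtain ⟨j, rfl⟩ := e.surjective w'
      fin_cases i <;> fin_cases j <;> simp <;> omega

lemma orbit_count {H X : Type*} [Group H] [Finite H] [Nontrivial H] [MulAction H X] [Finite X]
    (h2 : ∀ h : H, h ≠ 1 → Nat.card (fixedBy X h) = 2)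
    (hs : ∀ x : X, stabilizer H x ≠ ⊥) (ho : ∀ x : X, 3 ≤ Nat.card (orbit H x)) :
    Nat.card H = 12 ∨ Nat.card H = 24 ∨ (Nat.card H = 60 ∧
      (∀ x : X, Nat.card (stabilizer H x) = 2 ∨ Nat.card (stabilizer H x) = 3 ∨
        Nat.card (stabilizer H x) = 5) ∧
      ∀ x y : X, Nat.card (stabilizer H x) = 2 → Nat.card (stabilizer H y) = 2 →
        ∃ g : H, g • x = y) := by
  classical
  have := Fintype.ofFinite H
  have := Fintype.ofFinite X
  have : Fintype (orbitRel.Quotient H X) := Fintype.ofFinite _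
  have hN : 2 ≤ Nat.card H := Finite.one_lt_card
  have hos (x : X) : Nat.card (stabilizer H x) * Nat.card (orbit H x) = Nat.card H := by
    rw [Nat.card_congr (orbitEquivQuotientStabilizer H x), mul_comm]
    exact (Subgroup.card_eq_card_quotient_mul_card_subgroup _).symm
  have hsame (x y : X) (hxy : y ∈ orbit H x) :
      Nat.card (stabilizer H x) = Nat.card (stabilizer H y) := by
    have h1 := hos x
    have h2 := hos y
    rw [orbit_eq_iff.mpr hxy, ← h1] at h2
    have h3 := ho x
    exact (Nat.eq_of_mul_eq_mul_right (by omega) h2).symm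
  have hsum : ∑ w : orbitRel.Quotient H X, Nat.card (orbit H w.out) + 2 * (Nat.card H - 1)
      = Fintype.card (orbitRel.Quotient H X) * Nat.card H := by
    have hb := sum_card_fixedBy_eq_card_orbits_mul_card_group H X
    have hX : Nat.card X = ∑ w : orbitRel.Quotient H X, Nat.card (orbit H w.out) := by
      rw [Nat.card_congr (selfEquivSigmaOrbits H X), Nat.card_sigma]
    rw [← hX, Nat.card_eq_fintype_card (α := H)]
    convert hb using 1
    rw [← Finset.add_sum_erase _ _ (Finset.mem_univ (1 : H))]
    congr 1
    · simp [Nat.card_eq_fintype_card]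
    · rw [Finset.sum_congr rfl (g := fun _ => 2)]
      · simp [mul_comm]
      · intro h hh
        rw [← h2 h (by simpa using hh), Nat.card_eq_fintype_card]
  have key := num_orbits (Nat.card H) hN (fun w : orbitRel.Quotient H X =>
    Nat.card (stabilizer H w.out)) (fun w => Nat.card (orbit H w.out)) (fun w => hos _)
    (fun w => by
      have := (Subgroup.one_lt_card_iff_ne_bot (stabilizer H w.out)).mpr (hs _)
      exact this) (fun w => ho _) hsum
  have hout (x : X) : x ∈ orbit H (Quotient.out (s := orbitRel H X) (Quotient.mk _ x)) := by
    have h := Quotient.mk_out (s := orbitRel H X) x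
    exact ((orbitRel H X).symm h)
  refine key.imp id (Or.imp id ?_)
  rintro ⟨h, h5, hu⟩
  refine ⟨h, fun x => ?_, fun x y hx hy => ?_⟩
  · rw [← hsame _ _ (hout x)]
    exact h5 _
  · have hw := hu (Quotient.mk _ x) (Quotient.mk _ y) ((hsame _ _ (hout x)).trans hx)
      ((hsame _ _ (hout y)).trans hy)
    have := Quotient.exact hw
    obtain ⟨g, hg⟩ := ((orbitRel H X).symm this)
    exact ⟨g, hg⟩

lemma sylow_card {H : Type*} [Group H] [Finite H] (p k m : ℕ) [hp : Fact p.Prime]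
    (hc : Nat.card H = p ^ k * m) (hm : ¬ p ∣ m) (P : Sylow p H) : Nat.card P = p ^ k := by
  apply Nat.dvd_antisymm
  · obtain ⟨n, hn⟩ := IsPGroup.iff_card.mp P.2
    have h1 : Nat.card P ∣ p ^ k * m := hc ▸ Subgroup.card_subgroup_dvd_card P.1
    refine Nat.Coprime.dvd_of_dvd_mul_right ?_ h1
    have hn' : Nat.card P = p ^ n := hn
    rw [hn']
    exact Nat.Coprime.pow_left _ ((Nat.Prime.coprime_iff_not_dvd hp.out).mpr hm)
  · exact P.pow_dvd_card_of_pow_dvd_card (hc ▸ dvd_mul_right _ _)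

lemma iso_alt {H S : Type*} [Group H] [Finite H] (n : ℕ) (hn : 2 ≤ n) (hS : Nat.card S = n)
    (hc : 2 * Nat.card H = n.factorial)
    (f : H →* Equiv.Perm S) (hf : Function.Injective f) :
    Nonempty (H ≃* alternatingGroup (Fin n)) := by
  have : Finite S := Nat.finite_of_card_ne_zero (by omega)
  let e : S ≃ Fin n := Finite.equivFinOfCardEq hS
  let g : H →* Equiv.Perm (Fin n) := e.permCongrHom.toMonoidHom.comp f
  have hg : Function.Injective g := e.permCongrHom.injective.comp hf
  have hr : Nat.card g.range = Nat.card H := (Nat.card_congr (MonoidHom.ofInjective hg).toEquiv).symm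
  have hi : g.range.index = 2 := by
    have h1 := g.range.index_mul_card
    rw [hr, Nat.card_perm, Nat.card_fin, ← hc] at h1
    exact Nat.eq_of_mul_eq_mul_right Nat.card_pos h1
  have h3 := Equiv.Perm.eq_alternatingGroup_of_index_eq_two hi
  exact ⟨(MonoidHom.ofInjective hg).trans (MulEquiv.subgroupCongr h3)⟩

lemma iso_perm {H S : Type*} [Group H] [Finite H] (n : ℕ) (hn : 2 ≤ n) (hS : Nat.card S = n)
    (hc : Nat.card H = n.factorial)
    (f : H →* Equiv.Perm S) (hf : Function.Injective f) :
    Nonempty (H ≃* Equiv.Perm (Fin n)) := by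
  have : Finite S := Nat.finite_of_card_ne_zero (by omega)
  let e : S ≃ Fin n := Finite.equivFinOfCardEq hS
  let g : H →* Equiv.Perm (Fin n) := e.permCongrHom.toMonoidHom.comp f
  have hg : Function.Injective g := e.permCongrHom.injective.comp hf
  have hb : Function.Bijective g :=
    (Nat.bijective_iff_injective_and_card g).mpr ⟨hg, by rw [hc, Nat.card_perm, Nat.card_fin]⟩
  exact ⟨MulEquiv.ofBijective g hb⟩

/-- kernel of the action on Sylow subgroups is trivial -/
lemma sylow_ker {H : Type*} [Group H] [Finite H] (hcyc : ∀ h : H, h ≠ 1 → ¬ (Subgroup.zpowers h).Normal)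
    (p q m : ℕ) [hp : Fact p.Prime] (hq : q.Prime) (hN : Nat.card H = m * Nat.card (Sylow p H))
    (hm : ∀ k, k ∣ m → ¬ p ∣ k → k ∣ q) (P P' : Sylow p H) (hPP : P.1 ⊓ P'.1 = ⊥) :
    Function.Injective (MulAction.toPermHom H (Sylow p H)) := by
  rw [← MonoidHom.ker_eq_bot_iff]
  set K := (MulAction.toPermHom H (Sylow p H)).ker with hK
  have hle (Q : Sylow p H) : K ≤ Subgroup.normalizer Q := by
    intro k hk
    rw [← Sylow.smul_eq_iff_mem_normalizer]
    have := congrArg (fun σ => σ Q) (MonoidHom.mem_ker.mp hk)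
    simpa using this
  have hcard : Nat.card K ∣ m := by
    have h1 := (Subgroup.normalizer (P : Set H)).index_mul_card
    rw [← P.card_eq_index_normalizer, hN, mul_comm] at h1
    have h2 : Nat.card (Subgroup.normalizer (P : Set H)) = m :=
      Nat.eq_of_mul_eq_mul_right Nat.card_pos h1
    rw [← h2]
    exact Subgroup.card_dvd_of_le (hle P)
  have hpK : ¬ p ∣ Nat.card K := by
    intro hd
    obtain ⟨c, hc⟩ := exists_prime_orderOf_dvd_card' p hd
    have hcp : IsPGroup p (Subgroup.zpowers (c : H)) := by
      apply IsPGroup.of_card (n := 1)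
      rw [Nat.card_zpowers, Subgroup.orderOf_coe, hc, pow_one]
    have hin (Q : Sylow p H) : (c : H) ∈ Q.1 := by
      have h1 := hcp.inf_normalizer_sylow Q
      have h2 : (c : H) ∈ Subgroup.zpowers (c : H) ⊓ Subgroup.normalizer Q :=
        ⟨Subgroup.mem_zpowers _, hle Q c.2⟩
      rw [h1] at h2
      exact h2.2
    have : (c : H) ∈ P.1 ⊓ P'.1 := ⟨hin P, hin P'⟩
    rw [hPP, Subgroup.mem_bot] at this
    have h1 : c = 1 := Subtype.ext this
    rw [h1, orderOf_one] at hc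
    exact hp.out.one_lt.ne hc
  have hdq := hm _ hcard hpK
  rcases (Nat.dvd_prime hq).mp hdq with h1 | h1
  · exact Subgroup.card_eq_one.mp h1
  · exfalso
    have := Fact.mk hq
    have : Nontrivial K := (Finite.one_lt_card_iff_nontrivial).mp (h1 ▸ hq.one_lt)
    obtain ⟨k, hk⟩ := exists_ne (1 : K)
    have hz : Subgroup.zpowers (k : H) = K := by
      apply Subgroup.eq_of_le_of_card_ge
      · rw [Subgroup.zpowers_le]; exact k.2
      · rw [Nat.card_zpowers, Subgroup.orderOf_coe, orderOf_eq_card_of_forall_mem_zpowers]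
        intro x
        exact mem_zpowers_of_prime_card h1 hk
    apply hcyc k (by simpa using hk)
    rw [hz]
    exact MonoidHom.normal_ker _

lemma sylow3_four {H : Type*} [Group H] [Finite H] (hcyc : ∀ h : H, h ≠ 1 → ¬ (Subgroup.zpowers h).Normal)
    (m : ℕ) (hm : m ∣ 8) (hc : Nat.card H = 3 * m) :
    Nat.card (Sylow 3 H) = 4 ∧ ∃ P P' : Sylow 3 H, P.1 ⊓ P'.1 = ⊥ := by
  have := Fact.mk Nat.prime_three
  have hm3 : ¬ 3 ∣ m := fun h => by have := h.trans hm; omega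
  have h3 (P : Sylow 3 H) : Nat.card P = 3 :=
    (sylow_card 3 1 m (by simpa using hc) hm3 P).trans (by norm_num)
  have P : Sylow 3 H := default
  have h1 : Nat.card (Sylow 3 H) ∣ 8 := by
    refine P.card_dvd_index.trans (dvd_trans ?_ hm)
    have := P.1.index_mul_card
    have h4 : Nat.card P.1 = 3 := h3 P
    rw [h4, hc, mul_comm] at this
    rw [Nat.eq_of_mul_eq_mul_left (by norm_num) this]
  have h2 := card_sylow_modEq_one 3 H
  have h8 : Nat.card (Sylow 3 H) ≠ 1 := by
    intro hone
    have : Subsingleton (Sylow 3 H) := (Nat.card_eq_one_iff_unique.mp hone).1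
    have hn : P.1.Normal := Sylow.normal_of_subsingleton P
    have : Nontrivial P.1 := (Finite.one_lt_card_iff_nontrivial).mp (by
      have h4 : Nat.card P.1 = 3 := h3 P
      rw [h4]; norm_num)
    obtain ⟨k, hk⟩ := exists_ne (1 : P.1)
    have hz : Subgroup.zpowers (k : H) = P.1 := by
      apply Subgroup.eq_of_le_of_card_ge
      · rw [Subgroup.zpowers_le]; exact k.2
      · rw [Nat.card_zpowers, Subgroup.orderOf_coe, orderOf_eq_card_of_forall_mem_zpowers]
        intro x
        exact mem_zpowers_of_prime_card (h3 P) hk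
    exact hcyc k (by simpa using hk) (by rw [hz]; exact hn)
  have h4 : Nat.card (Sylow 3 H) = 4 := by
    have hle := Nat.le_of_dvd (by norm_num) h1
    unfold Nat.ModEq at h2
    interval_cases Nat.card (Sylow 3 H) <;> omega
  refine ⟨h4, ?_⟩
  have : Nontrivial (Sylow 3 H) := (Finite.one_lt_card_iff_nontrivial).mp (by rw [h4]; norm_num)
  obtain ⟨P', hP'⟩ := exists_ne P
  refine ⟨P, P', ?_⟩
  have hd : Nat.card (P.1 ⊓ P'.1 : Subgroup H) ∣ 3 := by
    have := Subgroup.card_dvd_of_le (inf_le_left : P.1 ⊓ P'.1 ≤ P.1)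
    have h4 : Nat.card P.1 = 3 := h3 P
    rwa [h4] at this
  rcases (Nat.dvd_prime Nat.prime_three).mp hd with h | h
  · exact Subgroup.card_eq_one.mp h
  · exfalso
    apply hP'
    have e1 : P.1 ⊓ P'.1 = P.1 := Subgroup.eq_of_le_of_card_ge inf_le_left (by
      have h4 : Nat.card P.1 = 3 := h3 P
      rw [h, h4])
    have e2 : P.1 ⊓ P'.1 = P'.1 := Subgroup.eq_of_le_of_card_ge inf_le_right (by
      have h4 : Nat.card P'.1 = 3 := h3 P'
      rw [h, h4])
    exact Sylow.ext (e2.symm.trans e1)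

lemma iso12 {H : Type*} [Group H] [Finite H] (hcyc : ∀ h : H, h ≠ 1 → ¬ (Subgroup.zpowers h).Normal)
    (hc : Nat.card H = 12) : Nonempty (H ≃* alternatingGroup (Fin 4)) := by
  have := Fact.mk Nat.prime_three
  obtain ⟨h4, P, P', hP⟩ := sylow3_four hcyc 4 (by norm_num) hc
  refine iso_alt 4 (by norm_num) h4 (by rw [hc]; rfl) _ (sylow_ker hcyc 3 3 3 Nat.prime_three
    (by rw [hc, h4]) (fun k hk _ => hk) P P' hP)

lemma iso24 {H : Type*} [Group H] [Finite H] (hcyc : ∀ h : H, h ≠ 1 → ¬ (Subgroup.zpowers h).Normal)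
    (hc : Nat.card H = 24) : Nonempty (H ≃* Equiv.Perm (Fin 4)) := by
  have := Fact.mk Nat.prime_three
  obtain ⟨h4, P, P', hP⟩ := sylow3_four hcyc 8 (by norm_num) hc
  refine iso_perm 4 (by norm_num) h4 (by rw [hc]; rfl) _ (sylow_ker hcyc 3 2 6 Nat.prime_two
    (by rw [hc, h4]) (fun k hk h3 => ?_) P P' hP)
  have := Nat.le_of_dvd (by norm_num) hk
  interval_cases k <;> omega

lemma iso60 {H : Type*} [Group H] [Finite H] (hcyc : ∀ h : H, h ≠ 1 → ¬ (Subgroup.zpowers h).Normal)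
    (hc : Nat.card H = 60)
    (hA : ∀ t : H, 2 ∣ orderOf t → Nat.card (Subgroup.centralizer {t}) ≤ 4)
    (hB : ∀ s t : H, 2 ∣ orderOf s → 2 ∣ orderOf t → IsConj s t) :
    Nonempty (H ≃* alternatingGroup (Fin 5)) := by
  classical
  have := Fact.mk Nat.prime_two
  have := Fintype.ofFinite (Sylow 2 H)
  have h4 (P : Sylow 2 H) : Nat.card P.1 = 4 :=
    (sylow_card 2 2 15 (by simpa using hc) (by norm_num) P).trans (by norm_num)
  have heven (P : Sylow 2 H) (t : H) (ht : t ∈ P.1) (h1 : t ≠ 1) : 2 ∣ orderOf t := by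
    have hd : orderOf t ∣ 2 ^ 2 := by
      have := Subgroup.orderOf_dvd_natCard P.1 ht
      rwa [h4 P] at this
    obtain ⟨k, hk, hk'⟩ := (Nat.dvd_prime_pow Nat.prime_two).mp hd
    rcases k with _ | k
    · exact absurd (orderOf_eq_one_iff.mp (by simpa using hk')) h1
    · rw [hk', pow_succ]; exact dvd_mul_left _ _
  have hcen (P : Sylow 2 H) (t : H) (ht : t ∈ P.1) (h1 : t ≠ 1) :
      P.1 = Subgroup.centralizer {t} := by
    apply Subgroup.eq_of_le_of_card_ge
    · have hcomm := IsPGroup.isMulCommutative_of_card_eq_prime_sq (p := 2) (G := P.1)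
        (by rw [h4 P]; norm_num)
      intro x hx
      rw [Subgroup.mem_centralizer_singleton_iff]
      have := hcomm.is_comm.comm ⟨t, ht⟩ ⟨x, hx⟩
      have h2 := congrArg Subtype.val this
      simpa using h2.symm
    · rw [h4 P]
      exact hA t (heven P t ht h1)
  have P : Sylow 2 H := default
  have : Nontrivial P.1 := (Finite.one_lt_card_iff_nontrivial).mp (by rw [h4 P]; norm_num)
  obtain ⟨⟨t, htP⟩, ht1'⟩ := exists_ne (1 : P.1)
  have ht1 : t ≠ 1 := fun h => ht1' (Subtype.ext h)
  have hI : Nat.card (conjugatesOf t) = 15 := by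
    have h1 := Subgroup.nat_card_centralizer_nat_card_stabilizer t
    rw [← hcen P t htP ht1, h4 P] at h1
    have h2 := (stabilizer (ConjAct H) t).index_mul_card
    rw [← h1, Subgroup.index, ← Nat.card_congr (orbitEquivQuotientStabilizer (ConjAct H) t)] at h2
    have h3 : Nat.card (ConjAct H) = 60 := hc
    have h5 : orbit (ConjAct H) t = conjugatesOf t := by
      ext x
      rw [ConjAct.mem_orbit_conjAct, isConj_comm]; rfl
    rw [h3, h5] at h2
    omega
  let F : (Σ Q : Sylow 2 H, {s : Q.1 // s ≠ 1}) → conjugatesOf t := fun z =>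
    ⟨z.2.1.1, hB _ _ (heven P t htP ht1) (heven z.1 _ z.2.1.2 (by simpa using z.2.2))⟩
  have hF : Function.Bijective F := by
    constructor
    · rintro ⟨Q, ⟨s, hs⟩, hs1⟩ ⟨Q', ⟨s', hs'⟩, hs1'⟩ h
      have hss : s = s' := congrArg Subtype.val h
      subst hss
      have hs2 : s ≠ 1 := fun h => hs1 (Subtype.ext h)
      have : Q = Q' := Sylow.ext ((hcen Q s hs hs2).trans (hcen Q' s hs' hs2).symm)
      subst this
      rfl
    · rintro ⟨s, hs⟩
      obtain ⟨g, hg⟩ := isConj_iff.mp (show IsConj t s from hs)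
      refine ⟨⟨g • P, ⟨s, ?_⟩, ?_⟩, ?_⟩
      · change s ∈ ((g • P : Sylow 2 H) : Subgroup H)
        rw [Sylow.coe_subgroup_smul]
        exact ⟨t, htP, by simpa using hg⟩
      · intro h
        have h2 : s = 1 := congrArg Subtype.val h
        rw [h2] at hg
        apply ht1
        have : t = g⁻¹ * (g * t * g⁻¹) * g := by group
        rw [this, hg]; group
      · rfl
  have hn : Nat.card (Sylow 2 H) = 5 := by
    have h1 := Nat.card_congr (Equiv.ofBijective F hF)
    rw [hI, Nat.card_sigma] at h1
    have h3 (Q : Sylow 2 H) : Nat.card {s : Q.1 // s ≠ 1} = 3 := by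
      have := Fintype.ofFinite Q.1
      have h6 := h4 Q
      rw [Nat.card_eq_fintype_card] at h6
      rw [Nat.card_eq_fintype_card, Fintype.card_subtype_compl, h6]
      simp
    simp only [h3] at h1
    simp only [Finset.sum_const, Finset.card_univ, smul_eq_mul] at h1
    rw [Nat.card_eq_fintype_card]
    omega
  have : Nontrivial (Sylow 2 H) := (Finite.one_lt_card_iff_nontrivial).mp (by rw [hn]; norm_num)
  obtain ⟨P', hP'⟩ := exists_ne P
  have hPP : P.1 ⊓ P'.1 = ⊥ := by
    rw [eq_bot_iff]
    rintro s ⟨hs, hs'⟩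
    rw [Subgroup.mem_bot]
    by_contra hs1
    exact hP' (Sylow.ext ((hcen P' s hs' hs1).trans (hcen P s hs hs1).symm))
  refine iso_alt 5 (by norm_num) hn (by rw [hc]; rfl) _ (sylow_ker hcyc 2 3 12 Nat.prime_three
    (by rw [hc, hn]) (fun k hk h3 => ?_) P P' hPP)
  have := Nat.le_of_dvd (by norm_num) hk
  interval_cases k <;> omega

/-- The classification, in combinatorial form. -/
theorem combi {H X : Type*} [Group H] [Finite H] [Nontrivial H] [MulAction H X] [Finite X]
    (h2 : ∀ h : H, h ≠ 1 → Nat.card (fixedBy X h) = 2)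
    (hs : ∀ x : X, stabilizer H x ≠ ⊥) (ho : ∀ x : X, 3 ≤ Nat.card (orbit H x)) :
    Nonempty (H ≃* alternatingGroup (Fin 4)) ∨ Nonempty (H ≃* Equiv.Perm (Fin 4)) ∨
      Nonempty (H ≃* alternatingGroup (Fin 5)) := by
  have hne (h : H) (h1 : h ≠ 1) : ∃ x : X, h • x = x := by
    have : Nonempty (fixedBy X h) := by
      by_contra hcon
      rw [not_nonempty_iff] at hcon
      have := h2 h h1
      rw [Nat.card_of_isEmpty] at this
      omega
    exact ⟨this.some.1, this.some.2⟩
  have hcyc : ∀ h : H, h ≠ 1 → ¬ (Subgroup.zpowers h).Normal := by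
    intro h h1 hn
    obtain ⟨x, hx⟩ := hne h h1
    have hsub : orbit H x ⊆ fixedBy X h := by
      rintro _ ⟨g, rfl⟩
      rw [mem_fixedBy]
      have hc := hn.conj_mem h (Subgroup.mem_zpowers h) g⁻¹
      have hst : Subgroup.zpowers h ≤ stabilizer H x := by
        rw [Subgroup.zpowers_le]; exact hx
      have h3 := hst hc
      rw [mem_stabilizer_iff] at h3
      calc h • g • x = g • ((g⁻¹ * h * g⁻¹⁻¹) • x) := by simp [mul_smul]
        _ = g • x := by rw [h3]
    have h3 := ho x
    have h4 := Nat.card_mono (Set.toFinite _) hsub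
    rw [h2 h h1] at h4
    omega
  rcases orbit_count h2 hs ho with h | h | ⟨h, h5, hu⟩
  · exact Or.inl (iso12 hcyc h)
  · exact Or.inr (Or.inl (iso24 hcyc h))
  · refine Or.inr (Or.inr (iso60 hcyc h ?_ ?_))
    all_goals
      have hst (t : H) (ht : 2 ∣ orderOf t) (x : X) (hx : t • x = x) :
          Nat.card (stabilizer H x) = 2 := by
        have h6 := Subgroup.orderOf_dvd_natCard (stabilizer H x) (mem_stabilizer_iff.mpr hx)
        have h7 := h5 x
        have h8 := ht.trans h6
        omega
      have hn1 (t : H) (ht : 2 ∣ orderOf t) : t ≠ 1 := by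
        rintro rfl
        rw [orderOf_one] at ht
        omega
    · intro t ht
      obtain ⟨x, hx⟩ := hne t (hn1 t ht)
      have h6 := hst t ht x hx
      set C := Subgroup.centralizer {t}
      have hsub : orbit C x ⊆ fixedBy X t := by
        rintro _ ⟨g, rfl⟩
        rw [mem_fixedBy]
        have hg := Subgroup.mem_centralizer_singleton_iff.mp g.2
        change t • (g : H) • x = (g : H) • x
        rw [← mul_smul, ← hg, mul_smul, hx]
      have h7 := Nat.card_mono (Set.toFinite _) hsub
      rw [h2 t (hn1 t ht)] at h7
      have h8 := (stabilizer C x).index_mul_card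
      rw [Subgroup.index, ← Nat.card_congr (orbitEquivQuotientStabilizer C x)] at h8
      have h9 : Nat.card (stabilizer C x) ≤ Nat.card (stabilizer H x) :=
        Nat.card_le_card_of_injective (fun c => (⟨c.1.1, c.2⟩ : stabilizer H x)) (by
          intro a b hab
          have := congrArg Subtype.val hab
          exact Subtype.ext (Subtype.ext this))
      rw [← h8]
      rw [h6] at h9
      exact Nat.mul_le_mul h7 h9
    · intro s t hs2 ht2
      obtain ⟨x, hx⟩ := hne s (hn1 s hs2)
      obtain ⟨y, hy⟩ := hne t (hn1 t ht2)
      have hcy := hst t ht2 y hy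
      obtain ⟨g, hg⟩ := hu x y (hst s hs2 x hx) hcy
      refine isConj_iff.mpr ⟨g, ?_⟩
      have hm : g * s * g⁻¹ ∈ stabilizer H y := by
        rw [mem_stabilizer_iff, ← hg]
        simp [mul_smul, hx]
      have := Fact.mk Nat.prime_two
      have hz : (⟨g * s * g⁻¹, hm⟩ : stabilizer H y) ∈
          Subgroup.zpowers (⟨t, hy⟩ : stabilizer H y) := by
        apply mem_zpowers_of_prime_card hcy
        intro h
        exact hn1 t ht2 (congrArg Subtype.val h)
      obtain ⟨k, hk⟩ := hz
      have hk' : t ^ k = g * s * g⁻¹ := by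
        have := congrArg Subtype.val hk
        simpa using this
      have ht22 : t ^ (2 : ℤ) = 1 := by
        have h6 := Subgroup.orderOf_dvd_natCard (stabilizer H y) (mem_stabilizer_iff.mpr hy)
        rw [hcy] at h6
        exact_mod_cast orderOf_dvd_iff_pow_eq_one.mp h6
      rw [← hk']
      rcases Int.even_or_odd' k with ⟨j, rfl | rfl⟩
      · exfalso
        rw [_root_.zpow_mul, ht22, _root_.one_zpow] at hk'
        apply hn1 s hs2
        have : s = g⁻¹ * (g * s * g⁻¹) * g := by group
        rw [this, ← hk']; group
      · rw [_root_.zpow_add, _root_.zpow_mul, ht22, _root_.one_zpow, one_mul, zpow_one]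


/-- bilinear form attached to a matrix -/
def bil (M : Matrix (Fin 3) (Fin 3) ℂ) (x y : Fin 3 → ℂ) : ℂ := x ⬝ᵥ M *ᵥ y

lemma bil_comm {M : Matrix (Fin 3) (Fin 3) ℂ} (hM : Mᵀ = M) (x y : Fin 3 → ℂ) :
    bil M x y = bil M y x := by
  unfold bil
  rw [dotProduct_mulVec, ← mulVec_transpose, hM, dotProduct_comm]

lemma bil_add_left (M : Matrix (Fin 3) (Fin 3) ℂ) (x y z : Fin 3 → ℂ) :
    bil M (x + y) z = bil M x z + bil M y z := by simp [bil, add_dotProduct]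

lemma bil_add_right (M : Matrix (Fin 3) (Fin 3) ℂ) (x y z : Fin 3 → ℂ) :
    bil M x (y + z) = bil M x y + bil M x z := by simp [bil, mulVec_add]

lemma bil_smul_left (M : Matrix (Fin 3) (Fin 3) ℂ) (c : ℂ) (y z : Fin 3 → ℂ) :
    bil M (c • y) z = c * bil M y z := by simp [bil]

lemma bil_smul_right (M : Matrix (Fin 3) (Fin 3) ℂ) (c : ℂ) (y z : Fin 3 → ℂ) :
    bil M y (c • z) = c * bil M y z := by simp [bil, mulVec_smul]

lemma bil_mulVec {M h : Matrix (Fin 3) (Fin 3) ℂ} {c : ℂ} (hh : hᵀ * M * h = c • M)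
    (x y : Fin 3 → ℂ) : bil M (h *ᵥ x) (h *ᵥ y) = c * bil M x y := by
  unfold bil
  have h1 : c * x ⬝ᵥ M *ᵥ y = x ⬝ᵥ ((c • M) *ᵥ y) := by simp [smul_mulVec]
  have h2 : h *ᵥ x = x ᵥ* hᵀ := by rw [vecMul_transpose]
  rw [h1, ← hh, h2, ← dotProduct_mulVec]
  simp [mulVec_mulVec, Matrix.mul_assoc]

lemma bil_inv {M h : Matrix (Fin 3) (Fin 3) ℂ} (hh : hᵀ * M * h = M)
    (x y : Fin 3 → ℂ) : bil M (h *ᵥ x) (h *ᵥ y) = bil M x y := by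
  rw [bil_mulVec (c := 1) (by simpa using hh), one_mul]

lemma bil_nondeg {M : Matrix (Fin 3) (Fin 3) ℂ} (hM : Mᵀ = M) (hd : M.det ≠ 0) (x : Fin 3 → ℂ)
    (hx : ∀ y, bil M x y = 0) : x = 0 := by
  by_contra hne
  apply hd
  rw [← exists_mulVec_eq_zero_iff]
  refine ⟨x, hne, ?_⟩
  funext i
  have := hx (Pi.single i 1)
  rw [bil_comm hM] at this
  simpa [bil] using this

lemma fix_exists {M h : Matrix (Fin 3) (Fin 3) ℂ} (hd : M.det ≠ 0) (hh : hᵀ * M * h = M)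
    (h1 : h.det = 1) : ∃ v, v ≠ 0 ∧ h *ᵥ v = v := by
  have hz : (h - 1).det = 0 := by
    have e1 : hᵀ * M * (h - 1) = (-1 : ℂ) • ((h - 1)ᵀ * M) := by
      rw [mul_sub, hh, transpose_sub, sub_mul]
      simp
    have e2 := congrArg Matrix.det e1
    rw [det_mul, det_mul, det_transpose, h1, det_smul, det_mul, det_transpose] at e2
    simp at e2
    have e3 : M.det * (h - 1).det = 0 := by linear_combination e2 / 2
    exact (mul_eq_zero.mp e3).resolve_left hd
  obtain ⟨v, hv, hv'⟩ := exists_mulVec_eq_zero_iff.mpr hz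
  refine ⟨v, hv, ?_⟩
  rw [sub_mulVec, one_mulVec, sub_eq_zero] at hv'
  exact hv'

lemma fix_nondeg {M h : Matrix (Fin 3) (Fin 3) ℂ} (hM : Mᵀ = M) (hd : M.det ≠ 0)
    (hh : hᵀ * M * h = M) (n : ℕ) (hn : 0 < n) (hpow : h ^ n = 1) (w : Fin 3 → ℂ)
    (hw : h *ᵥ w = w) (ho : ∀ y, h *ᵥ y = y → bil M w y = 0) : w = 0 := by
  apply bil_nondeg hM hd
  intro x
  have hk (k : ℕ) : bil M w (h ^ k *ᵥ x) = bil M w x := by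
    induction k with
    | zero => simp
    | succ k ih =>
      rw [pow_succ', ← mulVec_mulVec]
      conv_lhs => rw [← hw]
      rw [bil_inv hh, ih]
  have hfix : h *ᵥ (∑ k ∈ Finset.range n, h ^ k *ᵥ x) = ∑ k ∈ Finset.range n, h ^ k *ᵥ x := by
    rw [mulVec_sum]
    simp only [mulVec_mulVec, ← pow_succ']
    have e1 := Finset.sum_range_succ (fun k => h ^ k *ᵥ x) n
    rw [Finset.sum_range_succ', hpow, pow_zero] at e1
    exact add_right_cancel e1
  have h3 := ho _ hfix
  have h4 : bil M w (∑ k ∈ Finset.range n, h ^ k *ᵥ x) = ∑ k ∈ Finset.range n, bil M w (h ^ k *ᵥ x) := by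
    simp [bil, mulVec_sum, dotProduct_sum]
  rw [h4] at h3
  simp only [hk] at h3
  simp at h3
  exact h3.resolve_left hn.ne'

lemma fix_dim {M h : Matrix (Fin 3) (Fin 3) ℂ} (hM : Mᵀ = M) (hd : M.det ≠ 0)
    (hh : hᵀ * M * h = M) (h1 : h.det = 1) (hne : h ≠ 1) (n : ℕ) (hn : 0 < n) (hpow : h ^ n = 1)
    (v u : Fin 3 → ℂ) (hv : h *ᵥ v = v) (hv0 : v ≠ 0) (hu : h *ᵥ u = u) : ∃ c : ℂ, u = c • v := by
  have hMu : IsUnit M.det := isUnit_iff_ne_zero.mpr hd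
  set c := crossProduct v u with hc
  have hdet (y : Fin 3 → ℂ) : y ⬝ᵥ c = det (Matrix.of ![y, v, u]) := triple_product_eq_det y v u
  have hrow (y : Fin 3 → ℂ) : Matrix.of ![h *ᵥ y, v, u] = Matrix.of ![y, v, u] * hᵀ := by
    have : Matrix.of ![h *ᵥ y, v, u] = Matrix.of ![h *ᵥ y, h *ᵥ v, h *ᵥ u] := by rw [hv, hu]
    rw [this]
    ext i j
    fin_cases i <;> simp [Matrix.mul_apply, mulVec, dotProduct, mul_comm]
  have hT : hᵀ *ᵥ c = c := by
    have key (y : Fin 3 → ℂ) : y ⬝ᵥ hᵀ *ᵥ c = y ⬝ᵥ c := by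
      rw [dotProduct_mulVec, vecMul_transpose, hdet, hdet, hrow, det_mul, det_transpose, h1, mul_one]
    funext i
    simpa using key (Pi.single i 1)
  set w := M⁻¹ *ᵥ c with hw
  have hMw : M *ᵥ w = c := by rw [hw, mulVec_mulVec, mul_nonsing_inv _ hMu, one_mulVec]
  have hfw : h *ᵥ w = w := by
    have e1 : hᵀ *ᵥ (M *ᵥ (h *ᵥ w)) = hᵀ *ᵥ (M *ᵥ w) := by
      rw [hMw, hT, mulVec_mulVec, mulVec_mulVec, hh, hMw]
    have i1 : Function.Injective (hᵀ.mulVec) := mulVec_injective_of_isUnit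
      ((isUnit_iff_isUnit_det _).mpr (by rw [det_transpose, h1]; exact isUnit_one))
    have i2 : Function.Injective (M.mulVec) := mulVec_injective_of_isUnit
      ((isUnit_iff_isUnit_det _).mpr hMu)
    exact i2 (i1 e1)
  have hw0 : w = 0 := by
    apply fix_nondeg hM hd hh n hn hpow w hfw
    intro y hy
    rw [bil_comm hM]
    unfold bil
    rw [hMw, hdet]
    by_contra hcon
    apply hne
    have e1 := hrow y
    rw [hy] at e1
    have hu : IsUnit (det (Matrix.of ![y, v, u])) := isUnit_iff_ne_zero.mpr hcon
    have e2 : (Matrix.of ![y, v, u])⁻¹ * (Matrix.of ![y, v, u]) = (Matrix.of ![y, v, u])⁻¹ * (Matrix.of ![y, v, u] * hᵀ) :=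
      congrArg _ e1
    rw [← Matrix.mul_assoc, nonsing_inv_mul _ hu, one_mul] at e2
    rw [← transpose_transpose h, ← e2, transpose_one]
  have hc0 : c = 0 := by rw [← hMw, hw0, mulVec_zero]
  rw [hc, cross_apply] at hc0
  have c0 := congrFun hc0 0
  have c1 := congrFun hc0 1
  have c2 := congrFun hc0 2
  simp at c0 c1 c2
  obtain ⟨i, hi⟩ := Function.ne_iff.mp hv0
  refine ⟨u i / v i, ?_⟩
  simp only [Pi.zero_apply] at hi
  funext j
  simp only [Pi.smul_apply, smul_eq_mul]
  rw [div_mul_eq_mul_div, eq_div_iff hi]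
  fin_cases i <;> fin_cases j <;> simp <;> grind

lemma pole_exists {M h : Matrix (Fin 3) (Fin 3) ℂ} (hM : Mᵀ = M) (hd : M.det ≠ 0)
    (hh : hᵀ * M * h = M) (h1 : h.det = 1) (n : ℕ) (hn : 0 < n) (hpow : h ^ n = 1) :
    ∃ v, h *ᵥ v = v ∧ bil M v v = 1 := by
  suffices hs : ∃ v, h *ᵥ v = v ∧ bil M v v ≠ 0 by
    obtain ⟨v, hv, hb⟩ := hs
    obtain ⟨c, hc⟩ := IsAlgClosed.exists_pow_nat_eq (bil M v v) (n := 2) (by norm_num)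
    have hc0 : c ≠ 0 := by rintro rfl; apply hb; rw [← hc]; norm_num
    refine ⟨c⁻¹ • v, by rw [mulVec_smul, hv], ?_⟩
    rw [bil_smul_left, bil_smul_right, ← hc]
    field_simp
  obtain ⟨v, hv0, hv⟩ := fix_exists hd hh h1
  by_contra! hcon
  apply hv0
  apply fix_nondeg hM hd hh n hn hpow v hv
  intro y hy
  have e1 := hcon (v + y) (by rw [mulVec_add, hv, hy])
  have e2 := hcon v hv
  have e3 := hcon y hy
  rw [bil_add_left, bil_add_right, bil_add_right, e2, e3, bil_comm hM y v] at e1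
  linear_combination e1 / 2

lemma sl_mul_mulVec (g h : SpecialLinearGroup (Fin 3) ℂ) (v : Fin 3 → ℂ) :
    ((g * h : SpecialLinearGroup (Fin 3) ℂ) : Matrix (Fin 3) (Fin 3) ℂ) *ᵥ v =
      (g : Matrix (Fin 3) (Fin 3) ℂ) *ᵥ ((h : Matrix (Fin 3) (Fin 3) ℂ) *ᵥ v) := by
  rw [mulVec_mulVec]
  rfl

theorem so3_class (H : Subgroup (SpecialLinearGroup (Fin 3) ℂ)) [Finite H]
    (M : Matrix (Fin 3) (Fin 3) ℂ) (hM : Mᵀ = M) (hd : M.det ≠ 0)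
    (hinv : ∀ h ∈ H, (h : Matrix (Fin 3) (Fin 3) ℂ)ᵀ * M * (h : Matrix (Fin 3) (Fin 3) ℂ) = M)
    (hirr : ∀ W : Submodule ℂ (Fin 3 → ℂ),
      (∀ g ∈ H, ∀ v ∈ W, Matrix.mulVec (g : Matrix (Fin 3) (Fin 3) ℂ) v ∈ W) →
      W = ⊥ ∨ W = ⊤) :
    Nonempty (H ≃* alternatingGroup (Fin 4)) ∨ Nonempty (H ≃* Equiv.Perm (Fin 4)) ∨
      Nonempty (H ≃* alternatingGroup (Fin 5)) := by
  classical
  have hpow (h : SpecialLinearGroup (Fin 3) ℂ) (hh : h ∈ H) :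
      ∃ n, 0 < n ∧ (h : Matrix (Fin 3) (Fin 3) ℂ) ^ n = 1 := by
    obtain ⟨n, hn, hn'⟩ := (isOfFinOrder_of_finite (⟨h, hh⟩ : H)).exists_pow_eq_one
    refine ⟨n, hn, ?_⟩
    have := congrArg (fun z : H => ((z : SpecialLinearGroup (Fin 3) ℂ) : Matrix (Fin 3) (Fin 3) ℂ)) hn'
    simpa using this
  let X := {v : Fin 3 → ℂ // bil M v v = 1 ∧
    ∃ h ∈ H, h ≠ 1 ∧ (h : Matrix (Fin 3) (Fin 3) ℂ) *ᵥ v = v}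
  letI act : MulAction H X :=
    { smul := fun g x => ⟨((g : SpecialLinearGroup (Fin 3) ℂ) : Matrix (Fin 3) (Fin 3) ℂ) *ᵥ x.1, by
        rw [bil_inv (hinv g g.2)]; exact x.2.1, by
        obtain ⟨h, hh, h1, h2⟩ := x.2.2
        refine ⟨g * h * (g : SpecialLinearGroup (Fin 3) ℂ)⁻¹, H.mul_mem (H.mul_mem g.2 hh) (H.inv_mem g.2), ?_, ?_⟩
        · intro hcon
          apply h1
          have : h = (g : SpecialLinearGroup (Fin 3) ℂ)⁻¹ * (g * h * (g : SpecialLinearGroup (Fin 3) ℂ)⁻¹) * g := by group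
          rw [this, hcon]; group
        · refine (sl_mul_mulVec _ _ _).symm.trans ?_
          have : (g * h * (g : SpecialLinearGroup (Fin 3) ℂ)⁻¹) * g = g * h := by group
          rw [this, sl_mul_mulVec, h2]⟩
      one_smul := fun x => Subtype.ext (by
        change ((1 : SpecialLinearGroup (Fin 3) ℂ) : Matrix (Fin 3) (Fin 3) ℂ) *ᵥ x.1 = x.1
        simp)
      mul_smul := fun g g' x => Subtype.ext (by
        change ((g * g' : SpecialLinearGroup (Fin 3) ℂ) : Matrix (Fin 3) (Fin 3) ℂ) *ᵥ x.1 =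
          (g : Matrix (Fin 3) (Fin 3) ℂ) *ᵥ ((g' : Matrix (Fin 3) (Fin 3) ℂ) *ᵥ x.1)
        exact sl_mul_mulVec _ _ _) }
  have smul_val (g : H) (x : X) : (g • x).1 = ((g : SpecialLinearGroup (Fin 3) ℂ) : Matrix (Fin 3) (Fin 3) ℂ) *ᵥ x.1 := rfl
  have hne0 (v : Fin 3 → ℂ) (hv : bil M v v = 1) : v ≠ 0 := by
    rintro rfl
    simp [bil] at hv
  -- fixed vectors
  have hfix (h : SpecialLinearGroup (Fin 3) ℂ) (hh : h ∈ H) (h1 : h ≠ 1) : ∃ v : Fin 3 → ℂ, v ≠ -v ∧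
      {u : Fin 3 → ℂ | bil M u u = 1 ∧ (h : Matrix (Fin 3) (Fin 3) ℂ) *ᵥ u = u} = {v, -v} := by
    obtain ⟨n, hn, hn'⟩ := hpow h hh
    obtain ⟨v, hv, hb⟩ := pole_exists hM hd (hinv h hh) h.det_coe n hn hn'
    have hv0 := hne0 v hb
    refine ⟨v, fun hcon => hv0 (self_eq_neg.mp hcon), ?_⟩
    ext u
    simp only [Set.mem_ofPred_eq, Set.mem_insert_iff, Set.mem_singleton_iff]
    constructor
    · rintro ⟨hu, hu'⟩
      obtain ⟨c, rfl⟩ := fix_dim hM hd (hinv h hh) h.det_coe (fun hcon => h1 (Subtype.ext hcon))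
        n hn hn' v u hv hv0 hu'
      rw [bil_smul_left, bil_smul_right, hb, mul_one] at hu
      rcases mul_self_eq_one_iff.mp hu with rfl | rfl
      · left; simp
      · right; simp
    · rintro (rfl | rfl)
      · exact ⟨hb, hv⟩
      · refine ⟨?_, by rw [mulVec_neg, hv]⟩
        rw [← hb]
        simp [bil, mulVec_neg]
  have hXfin : Finite X := by
    apply Set.Finite.to_subtype (s := {v : Fin 3 → ℂ | bil M v v = 1 ∧
      ∃ h ∈ H, h ≠ 1 ∧ (h : Matrix (Fin 3) (Fin 3) ℂ) *ᵥ v = v})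
    apply Set.Finite.subset (s := ⋃ h : {h : H // h ≠ 1}, {u : Fin 3 → ℂ | bil M u u = 1 ∧
      ((h : H) : Matrix (Fin 3) (Fin 3) ℂ) *ᵥ u = u})
    · apply Set.finite_iUnion
      rintro ⟨⟨h, hh⟩, h1⟩
      obtain ⟨v, _, hv⟩ := hfix h hh (fun hcon => h1 (Subtype.ext hcon))
      simp only
      rw [hv]
      exact Set.toFinite _
    · rintro v ⟨hv, h, hh, h1, h2⟩
      rw [Set.mem_iUnion]
      exact ⟨⟨⟨h, hh⟩, fun hcon => h1 (congrArg Subtype.val hcon)⟩, hv, h2⟩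
  have hspan (v : Fin 3 → ℂ) (hv : v ≠ 0) :
      Submodule.span ℂ (Set.range fun g : H => ((g : SpecialLinearGroup (Fin 3) ℂ) : Matrix (Fin 3) (Fin 3) ℂ) *ᵥ v) = ⊤ := by
    refine (hirr _ ?_).resolve_left ?_
    · intro g hg w hw
      have : Submodule.span ℂ (Set.range fun g : H => ((g : SpecialLinearGroup (Fin 3) ℂ) : Matrix (Fin 3) (Fin 3) ℂ) *ᵥ v) ≤
          (Submodule.span ℂ (Set.range fun g : H => ((g : SpecialLinearGroup (Fin 3) ℂ) : Matrix (Fin 3) (Fin 3) ℂ) *ᵥ v)).comap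
            (Matrix.mulVecLin (g : Matrix (Fin 3) (Fin 3) ℂ)) := by
        rw [Submodule.span_le]
        rintro _ ⟨k, rfl⟩
        apply Submodule.subset_span
        refine ⟨⟨g, hg⟩ * k, ?_⟩
        simp [mulVec_mulVec]
      exact this hw
    · intro hbot
      rw [Submodule.span_eq_bot] at hbot
      apply hv
      have := hbot _ ⟨1, rfl⟩
      simpa using this
  have hnt : Nontrivial H := by
    by_contra hcon
    rw [not_nontrivial_iff_subsingleton] at hcon
    have h1 := hspan (Pi.single 0 1) (by simp)
    have hft : Fintype H := Fintype.ofFinite H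
    have h2 := finrank_range_le_card (R := ℂ) (fun g : H => ((g : SpecialLinearGroup (Fin 3) ℂ) : Matrix (Fin 3) (Fin 3) ℂ) *ᵥ (Pi.single 0 1))
    rw [Set.finrank, h1] at h2
    have : Fintype.card H ≤ 1 := Fintype.card_le_one_iff_subsingleton.mpr hcon
    simp at h2
    omega
  refine combi (H := H) (X := X) ?_ ?_ ?_
  · rintro ⟨h, hh⟩ h1
    have h1' : h ≠ 1 := fun hcon => h1 (Subtype.ext hcon)
    obtain ⟨v, hv, hset⟩ := hfix h hh h1'
    have hcard : Nat.card ({v, -v} : Set (Fin 3 → ℂ)) = 2 := Set.ncard_pair hv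
    rw [← hcard, ← hset]
    refine Nat.card_congr ⟨fun x => ⟨x.1.1, x.1.2.1, congrArg Subtype.val x.2⟩,
      fun u => ⟨⟨u.1, u.2.1, h, hh, h1', u.2.2⟩, Subtype.ext u.2.2⟩, fun x => rfl, fun u => rfl⟩
  · rintro ⟨v, hv, h, hh, h1, h2⟩ hbot
    have : (⟨h, hh⟩ : H) ∈ stabilizer H (⟨v, hv, h, hh, h1, h2⟩ : X) := Subtype.ext h2
    rw [hbot, Subgroup.mem_bot] at this
    exact h1 (congrArg Subtype.val this)
  · intro x
    have h1 := hspan x.1 (hne0 _ x.2.1)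
    have hfo : Fintype (orbit H x) := Fintype.ofFinite _
    have h2 := finrank_range_le_card (R := ℂ) (fun y : orbit H x => y.1.1)
    have h3 : Submodule.span ℂ (Set.range fun y : orbit H x => y.1.1) = ⊤ := by
      rw [← h1]
      congr 1
      ext u
      constructor
      · rintro ⟨⟨_, g, rfl⟩, rfl⟩
        exact ⟨g, rfl⟩
      · rintro ⟨g, rfl⟩
        exact ⟨⟨g • x, g, rfl⟩, rfl⟩
    rw [Set.finrank, h3] at h2
    rw [Nat.card_eq_fintype_card]
    simpa using h2

end Combinatorics

lemma hom_deg_zero {f : MvPolynomial (Fin 3) ℂ} (hf : f.IsHomogeneous 0) :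
    ∃ c, f = MvPolynomial.C c :=
  ⟨_, MvPolynomial.totalDegree_eq_zero_iff_eq_C.mp
    ((MvPolynomial.totalDegree_zero_iff_isHomogeneous _).mpr hf)⟩

lemma hom_deg_one {f : MvPolynomial (Fin 3) ℂ} (hf : f.IsHomogeneous 1) :
    ∃ a : Fin 3 → ℂ, ∀ v, MvPolynomial.eval v f = a ⬝ᵥ v := by
  have h0 (i : Fin 3) : ∃ c, MvPolynomial.pderiv i f = MvPolynomial.C c := hom_deg_zero hf.pderiv
  choose a ha using h0
  refine ⟨a, fun v => ?_⟩
  have h1 := congrArg (MvPolynomial.eval v) hf.sum_X_mul_pderiv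
  simp only [ha] at h1
  simp only [one_smul, map_sum, map_mul, MvPolynomial.eval_X, MvPolynomial.eval_C] at h1
  rw [← h1]
  simp [dotProduct, mul_comm]

lemma hom_deg_two {f : MvPolynomial (Fin 3) ℂ} (hf : f.IsHomogeneous 2) :
    ∃ M : Matrix (Fin 3) (Fin 3) ℂ, Mᵀ = M ∧ ∀ v, MvPolynomial.eval v f = bil M v v := by
  have h0 (i : Fin 3) : ∃ a : Fin 3 → ℂ, ∀ v, MvPolynomial.eval v (MvPolynomial.pderiv i f) = a ⬝ᵥ v :=
    hom_deg_one hf.pderiv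
  choose A hA using h0
  have h2 (v : Fin 3 → ℂ) : 2 * MvPolynomial.eval v f = bil (Matrix.of A) v v := by
    have h1 := congrArg (MvPolynomial.eval v) hf.sum_X_mul_pderiv
    simp only [map_sum, map_mul, MvPolynomial.eval_X, hA, map_nsmul] at h1
    rw [nsmul_eq_mul] at h1
    push_cast at h1
    rw [← h1]
    simp [bil, dotProduct, mulVec]
  have h3 (v : Fin 3 → ℂ) : bil (Matrix.of A)ᵀ v v = bil (Matrix.of A) v v := by
    unfold bil
    rw [mulVec_transpose, dotProduct_comm, ← dotProduct_mulVec]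
  refine ⟨(1 / 4 : ℂ) • (Matrix.of A + (Matrix.of A)ᵀ), ?_, fun v => ?_⟩
  · rw [transpose_smul, transpose_add, transpose_transpose, add_comm]
  · have : bil ((1 / 4 : ℂ) • (Matrix.of A + (Matrix.of A)ᵀ)) v v =
        1 / 4 * (bil (Matrix.of A) v v + bil (Matrix.of A)ᵀ v v) := by
      simp only [bil, smul_mulVec, add_mulVec, dotProduct_smul, dotProduct_add, smul_eq_mul]
    rw [this, h3, ← h2]
    ring

lemma polarize {M h : Matrix (Fin 3) (Fin 3) ℂ} (hM : Mᵀ = M) (c : ℂ)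
    (hq : ∀ v, bil M (h *ᵥ v) (h *ᵥ v) = c * bil M v v) : hᵀ * M * h = c • M := by
  have hp (x y : Fin 3 → ℂ) : bil M (h *ᵥ x) (h *ᵥ y) = c * bil M x y := by
    have e := hq (x + y)
    rw [mulVec_add, bil_add_left, bil_add_right, bil_add_right, bil_add_left, bil_add_right,
      bil_add_right, hq, hq, bil_comm hM (h *ᵥ y), bil_comm hM y x] at e
    linear_combination e / 2
  have hb (A : Matrix (Fin 3) (Fin 3) ℂ) (i j : Fin 3) :
      bil A (Pi.single i 1) (Pi.single j 1) = A i j := by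
    simp [bil]
  have hb2 (x y : Fin 3 → ℂ) : bil M (h *ᵥ x) (h *ᵥ y) = bil (hᵀ * M * h) x y := by
    unfold bil
    have h2 : h *ᵥ x = x ᵥ* hᵀ := by rw [vecMul_transpose]
    rw [h2, ← dotProduct_mulVec]
    simp [mulVec_mulVec, Matrix.mul_assoc]
  ext i j
  have := hp (Pi.single i 1) (Pi.single j 1)
  rw [hb2, hb, hb] at this
  exact this

/-- the projection of `SL₃` to `PGL₃` -/
abbrev proj3 : SpecialLinearGroup (Fin 3) ℂ →*
    (GL (Fin 3) ℂ ⧸ Subgroup.center (GL (Fin 3) ℂ)) :=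
  (QuotientGroup.mk' (Subgroup.center (GL (Fin 3) ℂ))).comp SpecialLinearGroup.toGL

lemma proj3_eq_one (g : SpecialLinearGroup (Fin 3) ℂ) :
    proj3 g = 1 ↔ ∃ z : ℂ, z ^ 3 = 1 ∧ (g : Matrix (Fin 3) (Fin 3) ℂ) = z • 1 := by
  have : proj3 g = 1 ↔ SpecialLinearGroup.toGL g ∈ Subgroup.center (GL (Fin 3) ℂ) := by
    exact QuotientGroup.eq_one_iff _
  rw [this, GeneralLinearGroup.mem_center_iff_val_mem_range_scalar]
  constructor
  · rintro ⟨z, hz⟩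
    have hz' : (g : Matrix (Fin 3) (Fin 3) ℂ) = z • 1 := by
      rw [smul_one_eq_diagonal]
      exact hz.symm
    refine ⟨z, ?_, hz'⟩
    have := g.det_coe
    rw [hz', det_smul] at this
    simpa using this
  · rintro ⟨z, _, hz⟩
    refine ⟨z, ?_⟩
    rw [smul_one_eq_diagonal] at hz
    exact hz.symm

/-- multiplication of an element of `SL₃` by a cube root of unity -/
def smulSL (z : ℂ) (hz : z ^ 3 = 1) (g : SpecialLinearGroup (Fin 3) ℂ) :
    SpecialLinearGroup (Fin 3) ℂ :=
  ⟨z • (g : Matrix (Fin 3) (Fin 3) ℂ), by rw [det_smul, g.det_coe]; simpa using hz⟩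

lemma smulSL_coe (z : ℂ) (hz : z ^ 3 = 1) (g : SpecialLinearGroup (Fin 3) ℂ) :
    (smulSL z hz g : Matrix (Fin 3) (Fin 3) ℂ) = z • (g : Matrix (Fin 3) (Fin 3) ℂ) := rfl

lemma proj3_smulSL (z : ℂ) (hz : z ^ 3 = 1) (g : SpecialLinearGroup (Fin 3) ℂ) :
    proj3 (smulSL z hz g) = proj3 g := by
  have h1 : smulSL z hz g = smulSL z hz 1 * g := by
    apply Subtype.ext
    change z • (g : Matrix (Fin 3) (Fin 3) ℂ) = (z • (1 : Matrix (Fin 3) (Fin 3) ℂ)) * (g : Matrix (Fin 3) (Fin 3) ℂ)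
    simp
  rw [h1, map_mul, (proj3_eq_one _).mpr ⟨z, hz, rfl⟩, one_mul]

lemma proj3_eq (g h : SpecialLinearGroup (Fin 3) ℂ) (hgh : proj3 g = proj3 h) :
    ∃ (z : ℂ) (hz : z ^ 3 = 1), g = smulSL z hz h := by
  have h1 : proj3 (g * h⁻¹) = 1 := by rw [map_mul, map_inv, hgh, mul_inv_cancel]
  obtain ⟨z, hz, h2⟩ := (proj3_eq_one _).mp h1
  refine ⟨z, hz, ?_⟩
  have h3 : g = (g * h⁻¹) * h := by group
  have h4 : g * h⁻¹ = smulSL z hz 1 := Subtype.ext h2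
  rw [h3, h4]
  apply Subtype.ext
  change (z • (1 : Matrix (Fin 3) (Fin 3) ℂ)) * (h : Matrix (Fin 3) (Fin 3) ℂ) = z • (h : Matrix (Fin 3) (Fin 3) ℂ)
  simp

/-- the special orthogonal group of a symmetric matrix -/
def isoGrp (M : Matrix (Fin 3) (Fin 3) ℂ) : Subgroup (SpecialLinearGroup (Fin 3) ℂ) where
  carrier := {h | (h : Matrix (Fin 3) (Fin 3) ℂ)ᵀ * M * (h : Matrix (Fin 3) (Fin 3) ℂ) = M}
  one_mem' := by
    change (1 : Matrix (Fin 3) (Fin 3) ℂ)ᵀ * M * 1 = M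
    simp
  mul_mem' := by
    intro a b ha hb
    change ((a : Matrix (Fin 3) (Fin 3) ℂ) * (b : Matrix (Fin 3) (Fin 3) ℂ))ᵀ * M *
      ((a : Matrix (Fin 3) (Fin 3) ℂ) * (b : Matrix (Fin 3) (Fin 3) ℂ)) = M
    change (a : Matrix (Fin 3) (Fin 3) ℂ)ᵀ * M * (a : Matrix (Fin 3) (Fin 3) ℂ) = M at ha
    change (b : Matrix (Fin 3) (Fin 3) ℂ)ᵀ * M * (b : Matrix (Fin 3) (Fin 3) ℂ) = M at hb
    rw [transpose_mul]
    conv_rhs => rw [← hb, ← ha]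
    simp only [Matrix.mul_assoc]
  inv_mem' := by
    intro a ha
    change (a : Matrix (Fin 3) (Fin 3) ℂ)ᵀ * M * (a : Matrix (Fin 3) (Fin 3) ℂ) = M at ha
    change ((a⁻¹ : SpecialLinearGroup (Fin 3) ℂ) : Matrix (Fin 3) (Fin 3) ℂ)ᵀ * M *
      ((a⁻¹ : SpecialLinearGroup (Fin 3) ℂ) : Matrix (Fin 3) (Fin 3) ℂ) = M
    have e : (a : Matrix (Fin 3) (Fin 3) ℂ) *
        ((a⁻¹ : SpecialLinearGroup (Fin 3) ℂ) : Matrix (Fin 3) (Fin 3) ℂ) = 1 :=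
      congrArg Subtype.val (mul_inv_cancel a)
    have e' := congrArg transpose e
    rw [transpose_mul, transpose_one] at e'
    calc _ = ((a⁻¹ : SpecialLinearGroup (Fin 3) ℂ) : Matrix (Fin 3) (Fin 3) ℂ)ᵀ *
          ((a : Matrix (Fin 3) (Fin 3) ℂ)ᵀ * M * (a : Matrix (Fin 3) (Fin 3) ℂ)) *
          ((a⁻¹ : SpecialLinearGroup (Fin 3) ℂ) : Matrix (Fin 3) (Fin 3) ℂ) := by rw [ha]
      _ = (((a⁻¹ : SpecialLinearGroup (Fin 3) ℂ) : Matrix (Fin 3) (Fin 3) ℂ)ᵀ *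
          (a : Matrix (Fin 3) (Fin 3) ℂ)ᵀ) * M * ((a : Matrix (Fin 3) (Fin 3) ℂ) *
          ((a⁻¹ : SpecialLinearGroup (Fin 3) ℂ) : Matrix (Fin 3) (Fin 3) ℂ)) := by
            simp only [Matrix.mul_assoc]
      _ = M := by rw [e, e', one_mul, mul_one]

theorem fwd_two (G : Subgroup (SpecialLinearGroup (Fin 3) ℂ)) (hGfin : Finite G)
    (hirr : ∀ W : Submodule ℂ (Fin 3 → ℂ),
      (∀ g ∈ G, ∀ v ∈ W, Matrix.mulVec (g : Matrix (Fin 3) (Fin 3) ℂ) v ∈ W) →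
      W = ⊥ ∨ W = ⊤)
    (M : Matrix (Fin 3) (Fin 3) ℂ) (hM : Mᵀ = M) (hM0 : M ≠ 0)
    (hc : ∀ g ∈ G, ∃ c : ℂ, c ≠ 0 ∧
      (g : Matrix (Fin 3) (Fin 3) ℂ)ᵀ * M * (g : Matrix (Fin 3) (Fin 3) ℂ) = c • M) :
    (Nonempty (G.map proj3 ≃* alternatingGroup (Fin 4)) ∨
      Nonempty (G.map proj3 ≃* Equiv.Perm (Fin 4)) ∨
      Nonempty (G.map proj3 ≃* alternatingGroup (Fin 5))) := by
  have hd : M.det ≠ 0 := by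
    intro h0
    obtain ⟨v, hv, hv'⟩ := exists_mulVec_eq_zero_iff.mpr h0
    have hk : LinearMap.ker (Matrix.mulVecLin M) = ⊥ ∨ LinearMap.ker (Matrix.mulVecLin M) = ⊤ := by
      apply hirr
      intro g hg v hv
      obtain ⟨c, hc0, hc⟩ := hc g hg
      change M *ᵥ v = 0 at hv
      change M *ᵥ ((g : Matrix (Fin 3) (Fin 3) ℂ) *ᵥ v) = 0
      have i1 : Function.Injective ((g : Matrix (Fin 3) (Fin 3) ℂ)ᵀ.mulVec) :=
        mulVec_injective_of_isUnit ((isUnit_iff_isUnit_det _).mpr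
          (by rw [det_transpose, g.det_coe]; exact isUnit_one))
      apply i1
      rw [mulVec_zero, mulVec_mulVec, mulVec_mulVec, hc, smul_mulVec, hv, smul_zero]
    rcases hk with h | h
    · apply hv
      have : v ∈ LinearMap.ker (Matrix.mulVecLin M) := hv'
      rw [h] at this
      exact this
    · apply hM0
      rw [LinearMap.ker_eq_top] at h
      ext i j
      have := congrFun (LinearMap.congr_fun h (Pi.single j 1)) i
      simpa using this
  have hc3 : ∀ g ∈ G, ∃ (c : ℂ) (hz : c ^ 3 = 1), smulSL c hz g ∈ isoGrp M := by
    intro g hg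
    obtain ⟨c, hc0, hc⟩ := hc g hg
    have e := congrArg Matrix.det hc
    rw [det_mul, det_mul, det_transpose, g.det_coe, det_smul] at e
    have hz : c ^ 3 = 1 := by
      simp at e
      apply mul_right_cancel₀ hd
      rw [one_mul]; exact e.symm
    refine ⟨c, hz, ?_⟩
    change (c • (g : Matrix (Fin 3) (Fin 3) ℂ))ᵀ * M * (c • (g : Matrix (Fin 3) (Fin 3) ℂ)) = M
    rw [transpose_smul, smul_mul_assoc, smul_mul_assoc, mul_smul_comm, hc, smul_smul, smul_smul]
    have : c * c * c = 1 := by rw [← hz]; ring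
    rw [this, one_smul]
  let H : Subgroup (SpecialLinearGroup (Fin 3) ℂ) := (G.map proj3).comap proj3 ⊓ isoGrp M
  have hGH : ∀ g ∈ G, ∃ (c : ℂ) (hz : c ^ 3 = 1), smulSL c hz g ∈ H := by
    intro g hg
    obtain ⟨c, hz, h⟩ := hc3 g hg
    refine ⟨c, hz, ?_, h⟩
    change proj3 (smulSL c hz g) ∈ G.map proj3
    rw [proj3_smulSL]
    exact ⟨g, hg, rfl⟩
  let φ : H →* G.map proj3 := (proj3.comp H.subtype).codRestrict (G.map proj3) (fun h => h.2.1)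
  have hφ : Function.Bijective φ := by
    constructor
    · rw [injective_iff_map_eq_one]
      rintro ⟨h, hh⟩ h1
      have h2 : proj3 h = 1 := congrArg Subtype.val h1
      obtain ⟨z, hz, h3⟩ := (proj3_eq_one _).mp h2
      have h4 : (h : Matrix (Fin 3) (Fin 3) ℂ)ᵀ * M * (h : Matrix (Fin 3) (Fin 3) ℂ) = M := hh.2
      rw [h3] at h4
      simp [smul_smul] at h4
      have h5 : (z * z - 1) • M = 0 := by rw [sub_smul, h4, one_smul, sub_self]
      have h6 := (smul_eq_zero.mp h5).resolve_right hM0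
      have h7 : z = 1 := by linear_combination hz - z * h6
      apply Subtype.ext
      apply Subtype.ext
      refine h3.trans ?_
      rw [h7, one_smul]
      rfl
    · rintro ⟨_, g, hg, rfl⟩
      obtain ⟨c, hz, h⟩ := hGH g hg
      exact ⟨⟨_, h⟩, Subtype.ext (proj3_smulSL c hz g)⟩
  have hGbfin : Finite (G.map proj3) := by
    have : ((G : Set (SpecialLinearGroup (Fin 3) ℂ)).Finite) := hGfin
    exact (this.image proj3)
  have hHfin : Finite H := Finite.of_injective φ hφ.1
  have e : H ≃* G.map proj3 := MulEquiv.ofBijective φ hφ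
  have := so3_class H M hM hd (fun h hh => hh.2) ?_
  · rcases this with ⟨⟨f⟩⟩ | ⟨⟨f⟩⟩ | ⟨⟨f⟩⟩
    · exact Or.inl ⟨e.symm.trans f⟩
    · exact Or.inr (Or.inl ⟨e.symm.trans f⟩)
    · exact Or.inr (Or.inr ⟨e.symm.trans f⟩)
  · intro W hW
    apply hirr W
    intro g hg v hv
    obtain ⟨c, hz, h⟩ := hGH g hg
    have h1 := hW _ h v hv
    rw [smulSL_coe, smul_mulVec] at h1
    have hc0 : c ≠ 0 := by rintro rfl; norm_num at hz
    exact (Submodule.smul_mem_iff W hc0).mp h1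

theorem fwd (G : Subgroup (SpecialLinearGroup (Fin 3) ℂ)) (hGfin : Finite G)
    (hirr : ∀ W : Submodule ℂ (Fin 3 → ℂ),
      (∀ g ∈ G, ∀ v ∈ W, Matrix.mulVec (g : Matrix (Fin 3) (Fin 3) ℂ) v ∈ W) →
      W = ⊥ ∨ W = ⊤)
    (f : MvPolynomial (Fin 3) ℂ) (d : ℕ) (hd1 : 1 ≤ d) (hd2 : d ≤ 2) (hf : f ≠ 0)
    (hfd : f.IsHomogeneous d)
    (hc : ∀ g ∈ G, ∃ c : ℂ, c ≠ 0 ∧ ∀ v,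
      MvPolynomial.eval (Matrix.mulVec (g : Matrix (Fin 3) (Fin 3) ℂ) v) f =
        c * MvPolynomial.eval v f) :
    (Nonempty (G.map proj3 ≃* alternatingGroup (Fin 4)) ∨
      Nonempty (G.map proj3 ≃* Equiv.Perm (Fin 4)) ∨
      Nonempty (G.map proj3 ≃* alternatingGroup (Fin 5))) := by
  have hf0 : ¬ ∀ v, MvPolynomial.eval v f = 0 := by
    intro h
    apply hf
    apply MvPolynomial.funext
    simpa using h
  obtain rfl | rfl : d = 1 ∨ d = 2 := by omega
  · exfalso
    obtain ⟨a, ha⟩ := hom_deg_one hfd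
    let L : (Fin 3 → ℂ) →ₗ[ℂ] ℂ := dotProductBilin ℂ ℂ a
    have hL (v : Fin 3 → ℂ) : L v = MvPolynomial.eval v f := (ha v).symm
    have hk : LinearMap.ker L = ⊥ ∨ LinearMap.ker L = ⊤ := by
      apply hirr
      intro g hg v hv
      obtain ⟨c, _, h⟩ := hc g hg
      rw [LinearMap.mem_ker, hL] at hv ⊢
      rw [h, hv, mul_zero]
    rcases hk with h | h
    · have h1 := LinearMap.finrank_le_finrank_of_injective (LinearMap.ker_eq_bot.mp h)
      simp at h1
    · apply hf0
      intro v
      rw [← hL]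
      exact LinearMap.mem_ker.mp (h ▸ Submodule.mem_top)
  · obtain ⟨M, hM, hMf⟩ := hom_deg_two hfd
    apply fwd_two G hGfin hirr M hM
    · rintro rfl
      apply hf0
      intro v
      rw [hMf]
      simp [bil]
    · intro g hg
      obtain ⟨c, hc0, h⟩ := hc g hg
      refine ⟨c, hc0, polarize hM c ?_⟩
      intro v
      rw [← hMf, ← hMf, h]

/-- a suitable pair of generators -/
def Good (K : Type) [Group K] : Prop :=
  ∃ x y : K, Subgroup.closure {x, y} = ⊤ ∧ x ^ 2 = 1 ∧ x ≠ 1 ∧ y ^ 3 = 1 ∧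
    (IsConj (x * y) (x * y)⁻¹ ∨ (x * y) ^ 3 = 1)

lemma Good.congr {K L : Type} [Group K] [Group L] (e : K ≃* L) (h : Good L) : Good K := by
  obtain ⟨x, y, h1, h2, h3, h4, h5⟩ := h
  refine ⟨e.symm x, e.symm y, ?_, ?_, ?_, ?_, ?_⟩
  · have := MonoidHom.map_closure e.symm.toMonoidHom {x, y}
    rw [h1, Set.image_pair] at this
    exact this.symm.trans (Subgroup.map_top_of_surjective _ e.symm.surjective)
  · rw [← map_pow, h2, map_one]
  · intro h
    exact h3 (by simpa using h)
  · rw [← map_pow, h4, map_one]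
  · rcases h5 with h5 | h5
    · left
      have := e.symm.toMonoidHom.map_isConj h5
      rw [map_inv, map_mul] at this
      exact this
    · right
      rw [← map_mul, ← map_pow, h5, map_one]

/-- a double transposition in `A₄` -/
def xA4 : alternatingGroup (Fin 4) :=
  ⟨c[0, 1] * c[2, 3], Equiv.Perm.mem_alternatingGroup.mpr (by decide)⟩

/-- a 3-cycle in `A₄` -/
def yA4 : alternatingGroup (Fin 4) :=
  ⟨c[0, 1, 2], Equiv.Perm.mem_alternatingGroup.mpr (by decide)⟩

/-- a double transposition in `A₅` -/
def xA5 : alternatingGroup (Fin 5) :=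
  ⟨c[0, 1] * c[2, 3], Equiv.Perm.mem_alternatingGroup.mpr (by decide)⟩

/-- a 3-cycle in `A₅` -/
def yA5 : alternatingGroup (Fin 5) :=
  ⟨c[0, 2, 4], Equiv.Perm.mem_alternatingGroup.mpr (by decide)⟩

/-- a conjugating element in `A₅` -/
def wA5 : alternatingGroup (Fin 5) :=
  ⟨c[1, 3] * c[2, 4], Equiv.Perm.mem_alternatingGroup.mpr (by decide)⟩

lemma good_A4 : Good (alternatingGroup (Fin 4)) := by
  refine ⟨xA4, yA4, ?_, by decide +kernel, by decide +kernel, by decide +kernel,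
    Or.inr (by decide +kernel)⟩
  rw [Subgroup.eq_top_iff']
  have key : ∀ g : Equiv.Perm (Fin 4), Equiv.Perm.sign g = 1 → ∃ i j : Fin 3, ∃ k : Fin 2, g =
      yA4.1 ^ (i : ℕ) * xA4.1 ^ (k : ℕ) * yA4.1 ^ (j : ℕ) := by decide +kernel
  rintro ⟨g, hg⟩
  obtain ⟨i, j, k, hg'⟩ := key g (Equiv.Perm.mem_alternatingGroup.mp hg)
  have : (⟨g, hg⟩ : alternatingGroup (Fin 4)) = yA4 ^ (i : ℕ) * xA4 ^ (k : ℕ) * yA4 ^ (j : ℕ) :=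
    Subtype.ext hg'
  rw [this]
  refine mul_mem (mul_mem (pow_mem (Subgroup.subset_closure ?_) _)
    (pow_mem (Subgroup.subset_closure ?_) _)) (pow_mem (Subgroup.subset_closure ?_) _) <;> simp

lemma good_S4 : Good (Equiv.Perm (Fin 4)) := by
  refine ⟨c[0, 1], c[1, 2, 3], ?_, by decide, by decide, by decide, Or.inl ?_⟩
  · set K := Subgroup.closure {(c[0, 1] : Equiv.Perm (Fin 4)), c[1, 2, 3]} with hK
    have hx : (c[0, 1] : Equiv.Perm (Fin 4)) ∈ K := Subgroup.subset_closure (by simp)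
    have hy : (c[1, 2, 3] : Equiv.Perm (Fin 4)) ∈ K := Subgroup.subset_closure (by simp)
    have d3 : 3 ∣ Nat.card K := by
      have : orderOf (⟨_, hy⟩ : K) = 3 := by
        rw [Subgroup.orderOf_mk]
        exact orderOf_eq_prime (by decide) (by decide)
      exact (dvd_of_eq this.symm).trans (orderOf_dvd_natCard _)
    have d4 : 4 ∣ Nat.card K := by
      have : orderOf (⟨_, mul_mem hx hy⟩ : K) = 2 ^ (1 + 1) := by
        rw [Subgroup.orderOf_mk]
        exact orderOf_eq_prime_pow (by decide) (by decide)
      have h4 : orderOf (⟨_, mul_mem hx hy⟩ : K) = 4 := this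
      exact (dvd_of_eq h4.symm).trans (orderOf_dvd_natCard _)
    have d12 : 12 ∣ Nat.card K := Nat.Coprime.mul_dvd_of_dvd_of_dvd (by norm_num) d3 d4
    have hc := K.card_mul_index
    have h24 : Nat.card (Equiv.Perm (Fin 4)) = 24 := by
      rw [Nat.card_eq_fintype_card]; decide
    rw [h24] at hc
    obtain ⟨m, hm⟩ := d12
    rw [hm] at hc
    have hmi : m * K.index = 2 := by nlinarith
    have hi2 : K.index ∣ 2 := ⟨m, by rw [← hmi, mul_comm]⟩
    rcases (Nat.dvd_prime Nat.prime_two).mp hi2 with h | h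
    · exact Subgroup.index_eq_one.mp h
    · exfalso
      have := Equiv.Perm.eq_alternatingGroup_of_index_eq_two h
      rw [this] at hx
      rw [Equiv.Perm.mem_alternatingGroup] at hx
      revert hx
      decide
  · rw [isConj_iff]
    decide +kernel

lemma good_A5 : Good (alternatingGroup (Fin 5)) := by
  refine ⟨xA5, yA5, ?_, by decide +kernel, by decide +kernel, by decide +kernel,
    Or.inl ?_⟩
  · set K := Subgroup.closure {xA5, yA5} with hK
    have hx : xA5 ∈ K :=
      Subgroup.subset_closure (by simp)
    have hy : yA5 ∈ K :=
      Subgroup.subset_closure (by simp)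
    have d3 : 3 ∣ Nat.card K := by
      have : orderOf (⟨_, hy⟩ : K) = 3 := by
        rw [Subgroup.orderOf_mk]
        exact orderOf_eq_prime (by decide +kernel) (by decide +kernel)
      exact (dvd_of_eq this.symm).trans (orderOf_dvd_natCard _)
    have d2 : 2 ∣ Nat.card K := by
      have : orderOf (⟨_, hx⟩ : K) = 2 := by
        rw [Subgroup.orderOf_mk]
        exact orderOf_eq_prime (by decide +kernel) (by decide +kernel)
      exact (dvd_of_eq this.symm).trans (orderOf_dvd_natCard _)
    have d5 : 5 ∣ Nat.card K := by
      have : orderOf (⟨_, mul_mem hx hy⟩ : K) = 5 := by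
        rw [Subgroup.orderOf_mk]
        have : Fact (Nat.Prime 5) := ⟨by norm_num⟩
        exact orderOf_eq_prime (by decide +kernel) (by decide +kernel)
      exact (dvd_of_eq this.symm).trans (orderOf_dvd_natCard _)
    have d30 : 30 ∣ Nat.card K := Nat.Coprime.mul_dvd_of_dvd_of_dvd (m := 6) (by norm_num)
      (Nat.Coprime.mul_dvd_of_dvd_of_dvd (m := 2) (by norm_num) d2 d3) d5
    have hc := K.card_mul_index
    have h60 : Nat.card (alternatingGroup (Fin 5)) = 60 := by
      rw [nat_card_alternatingGroup]; simp; decide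
    rw [h60] at hc
    obtain ⟨m, hm⟩ := d30
    rw [hm] at hc
    have hmi : m * K.index = 2 := by nlinarith
    have hi2 : K.index ∣ 2 := ⟨m, by rw [← hmi, mul_comm]⟩
    rcases (Nat.dvd_prime Nat.prime_two).mp hi2 with h | h
    · exact Subgroup.index_eq_one.mp h
    · have hn : K.Normal := Subgroup.normal_of_index_eq_two h
      have := alternatingGroup.isSimpleGroup (α := Fin 5) (by simp)
      rcases hn.eq_bot_or_eq_top with h | h
      · exfalso
        rw [h, Subgroup.mem_bot] at hx
        revert hx
        decide +kernel
      · exact h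
  · rw [isConj_iff]
    exact ⟨wA5, by decide +kernel⟩

lemma adj_three (a : Matrix (Fin 3) (Fin 3) ℂ) :
    a.adjugate = a * a - a.trace • a + a.adjugate.trace • 1 := by
  ext i j
  fin_cases i <;> fin_cases j <;>
    simp [adjugate_fin_three, trace_fin_three, Matrix.mul_apply, Fin.sum_univ_three] <;> ring

lemma invol_trace {a : Matrix (Fin 3) (Fin 3) ℂ} (ha : a * a = 1) (hd : a.det = 1) (h1 : a ≠ 1) :
    a.trace = -1 := by
  have hadj : a.adjugate = a := by
    calc a.adjugate = a.adjugate * (a * a) := by rw [ha, mul_one]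
      _ = (a.adjugate * a) * a := by rw [Matrix.mul_assoc]
      _ = a := by rw [adjugate_mul, hd, one_smul, one_mul]
  have h := adj_three a
  rw [hadj, ha] at h
  have h2 : (1 + a.trace) • (a - 1) = 0 := by
    rw [add_smul, one_smul, smul_sub]
    nth_rewrite 1 [h]
    abel
  rcases smul_eq_zero.mp h2 with h3 | h3
  · linear_combination h3
  · exact absurd (sub_eq_zero.mp h3) h1

lemma invol_vec {a : Matrix (Fin 3) (Fin 3) ℂ} (ha : a * a = 1) (hd : a.det = 1) (h1 : a ≠ 1) :
    ∃ v : Fin 3 → ℂ, v ≠ 0 ∧ a *ᵥ v = v ∧ ∀ x, ∃ c : ℂ, a *ᵥ x = -x + (2 * c) • v := by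
  have ht := invol_trace ha hd h1
  let p : Matrix (Fin 3) (Fin 3) ℂ := (1 / 2 : ℂ) • (1 + a)
  have hp : p * p = p := by
    have e : (1 + a) * (1 + a) = 1 + a + (a + 1) := by
      simp only [mul_add, add_mul, one_mul, mul_one, ha]
    simp only [p, smul_mul_assoc, mul_smul_comm, smul_smul, e]
    have : (1 + a + (a + 1)) = (2 : ℂ) • (1 + a) := by rw [two_smul]; abel
    rw [this, smul_smul]
    norm_num
  have htr : p.trace = 1 := by
    simp only [p, trace_smul, trace_add, ht, trace_one]
    norm_num
  have hproj : IsIdempotentElem (Matrix.toLin' p) := by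
    rw [IsIdempotentElem, Module.End.mul_eq_comp, ← Matrix.toLin'_mul, hp]
  have hpr := LinearMap.IsIdempotentElem.isProj_range _ hproj
  have hrk := hpr.trace
  rw [Matrix.trace_toLin'_eq, htr] at hrk
  have hrk1 : Module.finrank ℂ (LinearMap.range (Matrix.toLin' p)) = 1 := by exact_mod_cast hrk.symm
  obtain ⟨⟨v, hv⟩, hv0, hspan⟩ := finrank_eq_one_iff'.mp hrk1
  have hpv : p *ᵥ v = v := by
    have := hpr.map_id v hv
    simpa using this
  have hax (x : Fin 3 → ℂ) : a *ᵥ x = -x + (2 : ℂ) • (p *ᵥ x) := by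
    simp only [p, smul_mulVec, smul_smul, add_mulVec, one_mulVec]
    norm_num
  refine ⟨v, fun h => hv0 (Subtype.ext h), ?_, ?_⟩
  · rw [hax, hpv, two_smul]; abel
  · intro x
    obtain ⟨c, hc⟩ := hspan ⟨p *ᵥ x, x, by simp⟩
    refine ⟨c, ?_⟩
    have hc' : c • v = p *ᵥ x := congrArg Subtype.val hc
    rw [hax, ← hc', smul_smul]

/-- normal form of a pair of matrices -/
lemma normal_form {a b : Matrix (Fin 3) (Fin 3) ℂ} {lam : ℂ} (ha : a * a = 1) (hda : a.det = 1)
    (h1 : a ≠ 1) (hdb : b.det = 1) (hb : b * b * b = lam • 1)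
    (hirr : ∀ W : Submodule ℂ (Fin 3 → ℂ), (∀ v ∈ W, a *ᵥ v ∈ W ∧ b *ᵥ v ∈ W) → W = ⊥ ∨ W = ⊤) :
    ∃ (P : Matrix (Fin 3) (Fin 3) ℂ) (s t : ℂ), IsUnit P.det ∧
      a * P = P * !![1, 2 * s, 2 * t; 0, -1, 0; 0, 0, -1] ∧
      b * P = P * !![0, 0, 1; 1, 0, 0; 0, 1, 0] := by
  obtain ⟨v, hv0, hav, hx⟩ := invol_vec ha hda h1
  obtain ⟨s, hs⟩ := hx (b *ᵥ v)
  obtain ⟨t, ht⟩ := hx (b *ᵥ b *ᵥ v)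
  have hb3 : b *ᵥ b *ᵥ b *ᵥ v = lam • v := by
    rw [mulVec_mulVec, mulVec_mulVec, hb, smul_mulVec, one_mulVec]
  let P : Matrix (Fin 3) (Fin 3) ℂ := (Matrix.of ![v, b *ᵥ v, b *ᵥ b *ᵥ v])ᵀ
  have hcol (c : Matrix (Fin 3) (Fin 3) ℂ) : c * P =
      (Matrix.of ![c *ᵥ v, c *ᵥ b *ᵥ v, c *ᵥ b *ᵥ b *ᵥ v])ᵀ := by
    ext i j
    fin_cases j <;> rfl
  have haP : a * P = P * !![1, 2 * s, 2 * t; 0, -1, 0; 0, 0, -1] := by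
    rw [hcol, hav, hs, ht]
    ext i j
    fin_cases j <;> simp [P, Matrix.mul_apply, Fin.sum_univ_three] <;> ring
  have hbP : b * P = P * !![0, 0, lam; 1, 0, 0; 0, 1, 0] := by
    rw [hcol, hb3]
    ext i j
    fin_cases j <;> simp [P, Matrix.mul_apply, Fin.sum_univ_three] <;> ring
  have hPu : IsUnit P.det := by
    have hW : LinearMap.range (Matrix.mulVecLin P) = ⊥ ∨ LinearMap.range (Matrix.mulVecLin P) = ⊤ := by
      apply hirr
      rintro _ ⟨w, rfl⟩
      simp only [Matrix.mulVecLin_apply, mulVec_mulVec, haP, hbP]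
      rw [← mulVec_mulVec, ← mulVec_mulVec]
      exact ⟨⟨_, rfl⟩, ⟨_, rfl⟩⟩
    rcases hW with h | h
    · exfalso
      apply hv0
      have h2 := LinearMap.congr_fun (LinearMap.range_eq_bot.mp h) (Pi.single 0 1)
      funext i
      have := congrFun h2 i
      simpa [P] using this
    · rw [← isUnit_iff_isUnit_det, ← mulVec_surjective_iff_isUnit]
      exact LinearMap.range_eq_top.mp h
  have hlam : lam = 1 := by
    have := congrArg Matrix.det hbP
    rw [det_mul, det_mul, hdb, one_mul] at this
    have h3 : (!![0, 0, lam; 1, 0, 0; 0, 1, 0] : Matrix (Fin 3) (Fin 3) ℂ).det = 1 := by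
      apply mul_left_cancel₀ hPu.ne_zero
      rw [mul_one]; exact this.symm
    rw [det_fin_three] at h3
    simpa using h3
  subst hlam
  exact ⟨P, s, t, hPu, haP, hbP⟩

lemma trace_of_conj {c P C : Matrix (Fin 3) (Fin 3) ℂ} (hP : IsUnit P.det) (h : c * P = P * C) :
    c.trace = C.trace := by
  have : c = P * C * P⁻¹ := by rw [← h, Matrix.mul_assoc, mul_nonsing_inv _ hP, mul_one]
  rw [this, trace_mul_comm, ← Matrix.mul_assoc, nonsing_inv_mul _ hP, one_mul]

lemma intertw_mul {c d P C D : Matrix (Fin 3) (Fin 3) ℂ} (hc : c * P = P * C) (hd : d * P = P * D) :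
    (c * d) * P = P * (C * D) := by
  rw [Matrix.mul_assoc, hd, ← Matrix.mul_assoc, hc, Matrix.mul_assoc]

/-- transport of an invariant form -/
lemma form_transport {c P C N : Matrix (Fin 3) (Fin 3) ℂ} {z : ℂ} (hP : IsUnit P.det)
    (h : c * P = P * C) (hN : Cᵀ * N * C = z • N) :
    cᵀ * ((P⁻¹)ᵀ * N * P⁻¹) * c = z • ((P⁻¹)ᵀ * N * P⁻¹) := by
  have e : P⁻¹ * c = C * P⁻¹ := by
    have : c = P * C * P⁻¹ := by rw [← h, Matrix.mul_assoc, mul_nonsing_inv _ hP, mul_one]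
    rw [this, ← Matrix.mul_assoc, ← Matrix.mul_assoc, nonsing_inv_mul _ hP, one_mul]
  have e' := congrArg transpose e
  rw [transpose_mul, transpose_mul] at e'
  calc _ = (cᵀ * (P⁻¹)ᵀ) * N * (P⁻¹ * c) := by simp only [Matrix.mul_assoc]
    _ = (P⁻¹)ᵀ * (Cᵀ * N * C) * P⁻¹ := by rw [e, e']; simp only [Matrix.mul_assoc]
    _ = _ := by rw [hN]; simp

lemma form_exists {a b : Matrix (Fin 3) (Fin 3) ℂ} {lam : ℂ} (ha : a * a = 1) (hda : a.det = 1)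
    (h1 : a ≠ 1) (hdb : b.det = 1) (hb : b * b * b = lam • 1)
    (hirr : ∀ W : Submodule ℂ (Fin 3 → ℂ), (∀ v ∈ W, a *ᵥ v ∈ W ∧ b *ᵥ v ∈ W) → W = ⊥ ∨ W = ⊤)
    (hz : (∃ z : ℂ, z ^ 3 = 1 ∧ (a * b).trace = z * (b * b * a).trace) ∨
      ∃ mu : ℂ, (a * b) * (a * b) * (a * b) = mu • 1) :
    ∃ M : Matrix (Fin 3) (Fin 3) ℂ, Mᵀ = M ∧ M ≠ 0 ∧ aᵀ * M * a = M ∧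
      ∃ z : ℂ, z ≠ 0 ∧ bᵀ * M * b = z • M := by
  obtain ⟨P, s, t, hP, haP, hbP⟩ := normal_form ha hda h1 hdb hb hirr
  have t1 : (a * b).trace = 2 * s := by
    rw [trace_of_conj hP (intertw_mul haP hbP)]
    simp [trace_fin_three, Matrix.mul_apply, Fin.sum_univ_three]
  have t2 : (b * b * a).trace = 2 * t := by
    rw [trace_of_conj hP (intertw_mul (intertw_mul hbP hbP) haP)]
    simp [trace_fin_three, Matrix.mul_apply, Fin.sum_univ_three]
  have hst : ∃ z : ℂ, z ^ 3 = 1 ∧ s = z * t := by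
    rcases hz with ⟨z, hz, h⟩ | ⟨mu, hmu⟩
    · refine ⟨z, hz, ?_⟩
      rw [t1, t2] at h
      linear_combination h / 2
    · refine ⟨1, by norm_num, ?_⟩
      have hirr' : ∀ W : Submodule ℂ (Fin 3 → ℂ), (∀ v ∈ W, a *ᵥ v ∈ W ∧ (a * b) *ᵥ v ∈ W) →
          W = ⊥ ∨ W = ⊤ := by
        intro W hW
        apply hirr W
        intro v hv
        refine ⟨(hW v hv).1, ?_⟩
        have := (hW _ (hW v hv).2).1
        rwa [mulVec_mulVec, ← Matrix.mul_assoc, ha, one_mul] at this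
      obtain ⟨P', s', t', hP', haP', hbP'⟩ := normal_form ha hda h1
        (by rw [det_mul, hda, hdb, one_mul]) hmu hirr'
      have t3 : (a * b).trace = 0 := by
        rw [trace_of_conj hP' hbP']
        simp [trace_fin_three]
      have t4 : ((a * b) * (a * b)).trace = 0 := by
        rw [trace_of_conj hP' (intertw_mul hbP' hbP')]
        simp [trace_fin_three, Matrix.mul_apply, Fin.sum_univ_three]
      have t5 : ((a * b) * (a * b)).trace = 4 * s ^ 2 - 4 * t := by
        rw [trace_of_conj hP (intertw_mul (intertw_mul haP hbP) (intertw_mul haP hbP))]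
        simp [trace_fin_three, Matrix.mul_apply, Fin.sum_univ_three]
        ring
      have hs : s = 0 := by rw [t1] at t3; linear_combination t3 / 2
      rw [t4, hs] at t5
      rw [hs]
      linear_combination -t5 / 4
  obtain ⟨z, hz3, hs⟩ := hst
  let N : Matrix (Fin 3) (Fin 3) ℂ := !![1, s, t; s, z, z * s; t, z * s, z ^ 2]
  have hNs : Nᵀ = N := by
    ext i j
    fin_cases i <;> fin_cases j <;> simp [N]
  refine ⟨(P⁻¹)ᵀ * N * P⁻¹, ?_, ?_, ?_, z, by rintro rfl; norm_num at hz3, ?_⟩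
  · rw [transpose_mul, transpose_mul, transpose_transpose, hNs, Matrix.mul_assoc]
  · intro h
    have e : N = Pᵀ * ((P⁻¹)ᵀ * N * P⁻¹) * P := by
      calc N = (P⁻¹ * P)ᵀ * N * (P⁻¹ * P) := by rw [nonsing_inv_mul _ hP]; simp
        _ = _ := by rw [transpose_mul]; simp only [Matrix.mul_assoc]
    rw [h] at e
    have := congrFun (congrFun e 0) 0
    simp [N] at this
  · have := form_transport (z := 1) (N := N) hP haP ?_
    · rwa [one_smul] at this
    · rw [one_smul]
      ext i j
      fin_cases i <;> fin_cases j <;> simp [N, Matrix.mul_apply, Fin.sum_univ_three] <;> ring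
  · apply form_transport hP hbP
    ext i j
    fin_cases i <;> fin_cases j <;> simp [N, Matrix.mul_apply, Fin.sum_univ_three] <;> grind

lemma gen_lift (G : Subgroup (SpecialLinearGroup (Fin 3) ℂ)) (x y : G.map proj3)
    (hxy : Subgroup.closure {x, y} = ⊤) (a b : SpecialLinearGroup (Fin 3) ℂ)
    (ha : proj3 a = x) (hb : proj3 b = y) (S : Subgroup (SpecialLinearGroup (Fin 3) ℂ))
    (haS : a ∈ S) (hbS : b ∈ S) (g : SpecialLinearGroup (Fin 3) ℂ) (hg : g ∈ G) :
    ∃ (z : ℂ) (hz : z ^ 3 = 1), ∃ h ∈ S, g = smulSL z hz h := by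
  have h1 : Subgroup.closure {x, y} ≤ (S.map proj3).subgroupOf (G.map proj3) := by
    rw [Subgroup.closure_le]
    rintro w (rfl | rfl)
    · exact Subgroup.mem_subgroupOf.mpr ⟨a, haS, ha⟩
    · exact Subgroup.mem_subgroupOf.mpr ⟨b, hbS, hb⟩
  rw [hxy] at h1
  have h2 := h1 (Subgroup.mem_top (⟨proj3 g, g, hg, rfl⟩ : G.map proj3))
  obtain ⟨h, hh, h3⟩ := Subgroup.mem_subgroupOf.mp h2
  obtain ⟨z, hz, h4⟩ := proj3_eq g h h3.symm
  exact ⟨z, hz, h, hh, h4⟩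

/-- the stabilizer of a subspace -/
def stabSub (W : Submodule ℂ (Fin 3 → ℂ)) : Subgroup (SpecialLinearGroup (Fin 3) ℂ) where
  carrier := {g | ∀ v, v ∈ W ↔ (g : Matrix (Fin 3) (Fin 3) ℂ) *ᵥ v ∈ W}
  one_mem' := by
    intro v
    change v ∈ W ↔ (1 : Matrix (Fin 3) (Fin 3) ℂ) *ᵥ v ∈ W
    rw [one_mulVec]
  mul_mem' := by
    intro g h hg hh v
    rw [sl_mul_mulVec]
    exact (hh v).trans (hg _)
  inv_mem' := by
    intro g hg v
    have h1 := hg (((g⁻¹ : SpecialLinearGroup (Fin 3) ℂ) : Matrix (Fin 3) (Fin 3) ℂ) *ᵥ v)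
    rw [← sl_mul_mulVec, mul_inv_cancel] at h1
    have h2 : ((1 : SpecialLinearGroup (Fin 3) ℂ) : Matrix (Fin 3) (Fin 3) ℂ) *ᵥ v = v :=
      one_mulVec v
    rw [h2] at h1
    exact h1.symm

/-- the group of similitudes of a form -/
def simGrp (M : Matrix (Fin 3) (Fin 3) ℂ) : Subgroup (SpecialLinearGroup (Fin 3) ℂ) where
  carrier := {h | ∃ c : ℂ, c ≠ 0 ∧
    (h : Matrix (Fin 3) (Fin 3) ℂ)ᵀ * M * (h : Matrix (Fin 3) (Fin 3) ℂ) = c • M}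
  one_mem' := by
    refine ⟨1, one_ne_zero, ?_⟩
    change (1 : Matrix (Fin 3) (Fin 3) ℂ)ᵀ * M * 1 = (1 : ℂ) • M
    simp
  mul_mem' := by
    rintro a b ⟨c, hc, ha⟩ ⟨d, hd, hb⟩
    refine ⟨c * d, mul_ne_zero hc hd, ?_⟩
    change ((a : Matrix (Fin 3) (Fin 3) ℂ) * (b : Matrix (Fin 3) (Fin 3) ℂ))ᵀ * M *
      ((a : Matrix (Fin 3) (Fin 3) ℂ) * (b : Matrix (Fin 3) (Fin 3) ℂ)) = _
    rw [transpose_mul]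
    calc _ = (b : Matrix (Fin 3) (Fin 3) ℂ)ᵀ * ((a : Matrix (Fin 3) (Fin 3) ℂ)ᵀ * M *
          (a : Matrix (Fin 3) (Fin 3) ℂ)) * (b : Matrix (Fin 3) (Fin 3) ℂ) := by
            simp only [Matrix.mul_assoc]
      _ = _ := by rw [ha, mul_smul_comm, smul_mul_assoc, hb, smul_smul]
  inv_mem' := by
    rintro a ⟨c, hc, ha⟩
    refine ⟨c⁻¹, inv_ne_zero hc, ?_⟩
    have e : (a : Matrix (Fin 3) (Fin 3) ℂ) *
        ((a⁻¹ : SpecialLinearGroup (Fin 3) ℂ) : Matrix (Fin 3) (Fin 3) ℂ) = 1 :=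
      congrArg Subtype.val (mul_inv_cancel a)
    have e' := congrArg transpose e
    rw [transpose_mul, transpose_one] at e'
    have hM : M = c⁻¹ • ((a : Matrix (Fin 3) (Fin 3) ℂ)ᵀ * M * (a : Matrix (Fin 3) (Fin 3) ℂ)) := by
      rw [ha, smul_smul, inv_mul_cancel₀ hc, one_smul]
    calc _ = ((a⁻¹ : SpecialLinearGroup (Fin 3) ℂ) : Matrix (Fin 3) (Fin 3) ℂ)ᵀ *
          (c⁻¹ • ((a : Matrix (Fin 3) (Fin 3) ℂ)ᵀ * M * (a : Matrix (Fin 3) (Fin 3) ℂ))) *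
          ((a⁻¹ : SpecialLinearGroup (Fin 3) ℂ) : Matrix (Fin 3) (Fin 3) ℂ) := by rw [← hM]
      _ = c⁻¹ • ((((a⁻¹ : SpecialLinearGroup (Fin 3) ℂ) : Matrix (Fin 3) (Fin 3) ℂ)ᵀ *
          (a : Matrix (Fin 3) (Fin 3) ℂ)ᵀ) * M * ((a : Matrix (Fin 3) (Fin 3) ℂ) *
          ((a⁻¹ : SpecialLinearGroup (Fin 3) ℂ) : Matrix (Fin 3) (Fin 3) ℂ))) := by
            simp only [Matrix.mul_assoc, mul_smul_comm, smul_mul_assoc]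
      _ = c⁻¹ • M := by rw [e, e', one_mul, mul_one]

theorem bwd (G : Subgroup (SpecialLinearGroup (Fin 3) ℂ))
    (hirr : ∀ W : Submodule ℂ (Fin 3 → ℂ),
      (∀ g ∈ G, ∀ v ∈ W, Matrix.mulVec (g : Matrix (Fin 3) (Fin 3) ℂ) v ∈ W) →
      W = ⊥ ∨ W = ⊤) (hgood : Good (G.map proj3)) :
    ∃ M : Matrix (Fin 3) (Fin 3) ℂ, Mᵀ = M ∧ M ≠ 0 ∧ G ≤ simGrp M := by
  obtain ⟨x, y, hxy, hx2, hx1, hy3, hconj⟩ := hgood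
  obtain ⟨a0, ha0G, ha0⟩ := x.2
  obtain ⟨b, hbG, hb⟩ := y.2
  have h1 : proj3 (a0 * a0) = 1 := by
    rw [map_mul, ha0, ← pow_two]
    exact congrArg Subtype.val hx2
  obtain ⟨z, hz, hz'⟩ := (proj3_eq_one _).mp h1
  have hz'' : (a0 : Matrix (Fin 3) (Fin 3) ℂ) * (a0 : Matrix (Fin 3) (Fin 3) ℂ) = z • 1 := hz'
  obtain ⟨a, ha, haa⟩ : ∃ a : SpecialLinearGroup (Fin 3) ℂ, proj3 a = x ∧
      (a : Matrix (Fin 3) (Fin 3) ℂ) * (a : Matrix (Fin 3) (Fin 3) ℂ) = 1 := by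
    refine ⟨smulSL z hz a0, by rw [proj3_smulSL, ha0], ?_⟩
    rw [smulSL_coe, smul_mul_smul_comm, hz'', smul_smul]
    have : z * z * z = 1 := by rw [← hz]; ring
    rw [this, one_smul]
  have ha1 : (a : Matrix (Fin 3) (Fin 3) ℂ) ≠ 1 := by
    intro h
    apply hx1
    apply Subtype.ext
    rw [← ha]
    exact (proj3_eq_one _).mpr ⟨1, by norm_num, by rw [one_smul]; exact h⟩
  have h2 : proj3 (b * b * b) = 1 := by
    rw [map_mul, map_mul, hb, ← pow_two, ← pow_succ]
    exact congrArg Subtype.val hy3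
  obtain ⟨lam, hlam, hlam'⟩ := (proj3_eq_one _).mp h2
  have hbbb : (b : Matrix (Fin 3) (Fin 3) ℂ) * (b : Matrix (Fin 3) (Fin 3) ℂ) *
      (b : Matrix (Fin 3) (Fin 3) ℂ) = lam • 1 := hlam'
  have hlam0 : lam ≠ 0 := by rintro rfl; norm_num at hlam
  have hirr2 : ∀ W : Submodule ℂ (Fin 3 → ℂ), (∀ v ∈ W, (a : Matrix (Fin 3) (Fin 3) ℂ) *ᵥ v ∈ W ∧
      (b : Matrix (Fin 3) (Fin 3) ℂ) *ᵥ v ∈ W) → W = ⊥ ∨ W = ⊤ := by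
    intro W hW
    have haS : a ∈ stabSub W := by
      intro v
      refine ⟨fun hv => (hW v hv).1, fun hv => ?_⟩
      have := (hW _ hv).1
      rwa [mulVec_mulVec, haa, one_mulVec] at this
    have hbS : b ∈ stabSub W := by
      intro v
      refine ⟨fun hv => (hW v hv).2, fun hv => ?_⟩
      have := (hW _ (hW _ hv).2).2
      rw [mulVec_mulVec, mulVec_mulVec, hbbb, smul_mulVec, one_mulVec] at this
      exact (Submodule.smul_mem_iff W hlam0).mp this
    apply hirr
    intro g hg v hv
    obtain ⟨z, hz, h, hh, rfl⟩ := gen_lift G x y hxy a b ha hb _ haS hbS g hg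
    rw [smulSL_coe, smul_mulVec]
    exact W.smul_mem _ ((hh v).mp hv)
  have hzz : (∃ z : ℂ, z ^ 3 = 1 ∧ ((a : Matrix (Fin 3) (Fin 3) ℂ) * (b : Matrix (Fin 3) (Fin 3) ℂ)).trace =
      z * ((b : Matrix (Fin 3) (Fin 3) ℂ) * (b : Matrix (Fin 3) (Fin 3) ℂ) * (a : Matrix (Fin 3) (Fin 3) ℂ)).trace) ∨
      ∃ mu : ℂ, ((a : Matrix (Fin 3) (Fin 3) ℂ) * (b : Matrix (Fin 3) (Fin 3) ℂ)) *
        ((a : Matrix (Fin 3) (Fin 3) ℂ) * (b : Matrix (Fin 3) (Fin 3) ℂ)) *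
        ((a : Matrix (Fin 3) (Fin 3) ℂ) * (b : Matrix (Fin 3) (Fin 3) ℂ)) = mu • 1 := by
    rcases hconj with hconj | h3
    · left
      obtain ⟨w, hw⟩ := isConj_iff.mp hconj
      obtain ⟨g, hgG, hg⟩ := w.2
      have h3 : proj3 (g * (a * b) * g⁻¹) = proj3 ((a * b)⁻¹) := by
        simp only [map_mul, map_inv, ha, hb, hg]
        exact congrArg Subtype.val hw
      obtain ⟨u, hu, h4⟩ := proj3_eq _ _ h3
      have h5 : ((g * (a * b) * g⁻¹ : SpecialLinearGroup (Fin 3) ℂ) : Matrix (Fin 3) (Fin 3) ℂ).trace =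
          ((a : Matrix (Fin 3) (Fin 3) ℂ) * (b : Matrix (Fin 3) (Fin 3) ℂ)).trace := by
        change ((g : Matrix (Fin 3) (Fin 3) ℂ) * ((a : Matrix (Fin 3) (Fin 3) ℂ) *
          (b : Matrix (Fin 3) (Fin 3) ℂ)) *
          ((g⁻¹ : SpecialLinearGroup (Fin 3) ℂ) : Matrix (Fin 3) (Fin 3) ℂ)).trace = _
        have e : ((g⁻¹ : SpecialLinearGroup (Fin 3) ℂ) : Matrix (Fin 3) (Fin 3) ℂ) *
            (g : Matrix (Fin 3) (Fin 3) ℂ) = 1 := congrArg Subtype.val (inv_mul_cancel g)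
        rw [trace_mul_comm, ← Matrix.mul_assoc, e, one_mul]
      have h6 : (b : Matrix (Fin 3) (Fin 3) ℂ) * (b : Matrix (Fin 3) (Fin 3) ℂ) *
          (a : Matrix (Fin 3) (Fin 3) ℂ) = lam •
          (((a * b)⁻¹ : SpecialLinearGroup (Fin 3) ℂ) : Matrix (Fin 3) (Fin 3) ℂ) := by
        have e : ((a : Matrix (Fin 3) (Fin 3) ℂ) * (b : Matrix (Fin 3) (Fin 3) ℂ)) *
            (((a * b)⁻¹ : SpecialLinearGroup (Fin 3) ℂ) : Matrix (Fin 3) (Fin 3) ℂ) = 1 :=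
          congrArg Subtype.val (mul_inv_cancel (a * b))
        calc _ = (b : Matrix (Fin 3) (Fin 3) ℂ) * (b : Matrix (Fin 3) (Fin 3) ℂ) *
            (a : Matrix (Fin 3) (Fin 3) ℂ) *
            (((a : Matrix (Fin 3) (Fin 3) ℂ) * (b : Matrix (Fin 3) (Fin 3) ℂ)) *
            (((a * b)⁻¹ : SpecialLinearGroup (Fin 3) ℂ) : Matrix (Fin 3) (Fin 3) ℂ)) := by
              rw [e, mul_one]
          _ = (b : Matrix (Fin 3) (Fin 3) ℂ) * (b : Matrix (Fin 3) (Fin 3) ℂ) *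
            ((a : Matrix (Fin 3) (Fin 3) ℂ) * (a : Matrix (Fin 3) (Fin 3) ℂ)) *
            (b : Matrix (Fin 3) (Fin 3) ℂ) *
            (((a * b)⁻¹ : SpecialLinearGroup (Fin 3) ℂ) : Matrix (Fin 3) (Fin 3) ℂ) := by
              simp only [Matrix.mul_assoc]
          _ = _ := by rw [haa, mul_one, hbbb, smul_mul_assoc, one_mul]
      refine ⟨u * lam ^ 2, by
        rw [mul_pow, hu, one_mul, ← pow_mul, mul_comm 2 3, pow_mul, hlam, one_pow], ?_⟩
      rw [← h5, h4, smulSL_coe, h6, trace_smul, trace_smul, smul_eq_mul, smul_eq_mul]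
      linear_combination (-u * (((a * b)⁻¹ : SpecialLinearGroup (Fin 3) ℂ) :
        Matrix (Fin 3) (Fin 3) ℂ).trace) * hlam
    · right
      have h4 : proj3 (a * b * (a * b) * (a * b)) = 1 := by
        rw [map_mul, map_mul, map_mul, ha, hb, ← pow_two, ← pow_succ]
        exact congrArg Subtype.val h3
      obtain ⟨mu, _, hmu⟩ := (proj3_eq_one _).mp h4
      exact ⟨mu, hmu⟩
  obtain ⟨M, hM, hM0, haM, c, hc, hbM⟩ := form_exists haa a.det_coe ha1 b.det_coe hbbb hirr2 hzz
  refine ⟨M, hM, hM0, ?_⟩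
  intro g hg
  obtain ⟨z, hz, h, hh, rfl⟩ := gen_lift G x y hxy a b ha hb (simGrp M)
    ⟨1, one_ne_zero, by rw [one_smul]; exact haM⟩ ⟨c, hc, hbM⟩ g hg
  obtain ⟨d, hd, hh⟩ := hh
  have hz0 : z ≠ 0 := by rintro rfl; norm_num at hz
  refine ⟨z * z * d, mul_ne_zero (mul_ne_zero hz0 hz0) hd, ?_⟩
  rw [smulSL_coe, transpose_smul, smul_mul_assoc, smul_mul_assoc, mul_smul_comm, hh, smul_smul,
    smul_smul]

lemma quad_poly {M : Matrix (Fin 3) (Fin 3) ℂ} (hM : Mᵀ = M) (hM0 : M ≠ 0) :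
    ∃ f : MvPolynomial (Fin 3) ℂ, f ≠ 0 ∧ f.IsHomogeneous 2 ∧
      ∀ v, MvPolynomial.eval v f = bil M v v := by
  let f : MvPolynomial (Fin 3) ℂ := ∑ i, ∑ j,
    MvPolynomial.C (M i j) * (MvPolynomial.X i * MvPolynomial.X j)
  have hf (v : Fin 3 → ℂ) : MvPolynomial.eval v f = bil M v v := by
    simp only [f, map_sum, map_mul, MvPolynomial.eval_X, MvPolynomial.eval_C, bil, dotProduct,
      mulVec, Finset.mul_sum]
    refine Finset.sum_congr rfl fun i _ => Finset.sum_congr rfl fun j _ => ?_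
    ring
  refine ⟨f, ?_, ?_, hf⟩
  · intro h0
    apply hM0
    have h1 := polarize (h := 1) hM 0 (fun v => by
      rw [one_mulVec, ← hf, h0, zero_mul, map_zero])
    simpa using h1
  · apply MvPolynomial.IsHomogeneous.sum
    intro i _
    apply MvPolynomial.IsHomogeneous.sum
    intro j _
    have := (MvPolynomial.isHomogeneous_C (Fin 3) (M i j)).mul
      ((MvPolynomial.isHomogeneous_X ℂ i).mul (MvPolynomial.isHomogeneous_X ℂ j))
    simpa using this

/-- A finite irreducible subgroup `G ≤ SL(3, ℂ)` has a nonzero homogeneous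
semi-invariant of degree at most 2 if and only if its image `Ḡ` in `PGL(3, ℂ)` is isomorphic
to `A₄`, `S₄` or `A₅`. -/
theorem stmt_5 (G : Subgroup (SpecialLinearGroup (Fin 3) ℂ)) (hGfin : Finite G)
    (hirr : ∀ W : Submodule ℂ (Fin 3 → ℂ),
      (∀ g ∈ G, ∀ v ∈ W, Matrix.mulVec (g : Matrix (Fin 3) (Fin 3) ℂ) v ∈ W) →
      W = ⊥ ∨ W = ⊤)
    (Gbar : Subgroup (GL (Fin 3) ℂ ⧸ Subgroup.center (GL (Fin 3) ℂ)))
    (hGbar : Gbar = Subgroup.map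
      ((QuotientGroup.mk' (Subgroup.center (GL (Fin 3) ℂ))).comp
        SpecialLinearGroup.toGL) G) :
    (∃ (f : MvPolynomial (Fin 3) ℂ) (d : ℕ), 1 ≤ d ∧ d ≤ 2 ∧ f ≠ 0 ∧ f.IsHomogeneous d ∧
      ∃ χ : G →* ℂˣ, ∀ (g : G) (v : Fin 3 → ℂ),
        MvPolynomial.eval
            (Matrix.mulVec
              (((g : SpecialLinearGroup (Fin 3) ℂ)⁻¹ : SpecialLinearGroup (Fin 3) ℂ) :
                Matrix (Fin 3) (Fin 3) ℂ) v) f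
          = (χ g : ℂ) * MvPolynomial.eval v f) ↔
    (Nonempty (Gbar ≃* alternatingGroup (Fin 4)) ∨
      Nonempty (Gbar ≃* Equiv.Perm (Fin 4)) ∨
      Nonempty (Gbar ≃* alternatingGroup (Fin 5))) := by
  have hGbar' : Gbar = G.map proj3 := hGbar
  clear hGbar
  subst hGbar'
  constructor
  · rintro ⟨f, d, hd1, hd2, hf, hfd, χ, hχ⟩
    refine fwd G hGfin hirr f d hd1 hd2 hf hfd ?_
    intro g hg
    refine ⟨(χ ⟨g⁻¹, inv_mem hg⟩ : ℂ), Units.ne_zero _, fun v => ?_⟩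
    have h := hχ ⟨g⁻¹, inv_mem hg⟩ v
    have e : ((⟨g⁻¹, inv_mem hg⟩ : G) : SpecialLinearGroup (Fin 3) ℂ)⁻¹ = g := inv_inv g
    rw [e] at h
    exact h
  · intro h
    have hgood : Good (G.map proj3) := by
      rcases h with ⟨⟨e⟩⟩ | ⟨⟨e⟩⟩ | ⟨⟨e⟩⟩
      · exact good_A4.congr e
      · exact good_S4.congr e
      · exact good_A5.congr e
    obtain ⟨M, hM, hM0, hGM⟩ := bwd G hirr hgood
    obtain ⟨f, hf0, hf2, hf⟩ := quad_poly hM hM0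
    have hc (g : G) : ∃ c : ℂ, c ≠ 0 ∧
        (((g : SpecialLinearGroup (Fin 3) ℂ)⁻¹ : SpecialLinearGroup (Fin 3) ℂ) :
          Matrix (Fin 3) (Fin 3) ℂ)ᵀ * M *
        (((g : SpecialLinearGroup (Fin 3) ℂ)⁻¹ : SpecialLinearGroup (Fin 3) ℂ) :
          Matrix (Fin 3) (Fin 3) ℂ) = c • M := hGM (inv_mem g.2)
    choose c hc0 hcM using hc
    have hmul (g h : G) : c (g * h) = c g * c h := by
      have e1 := hcM (g * h)
      have e2 : (((g * h : G) : SpecialLinearGroup (Fin 3) ℂ)⁻¹ : SpecialLinearGroup (Fin 3) ℂ) =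
          (h : SpecialLinearGroup (Fin 3) ℂ)⁻¹ * (g : SpecialLinearGroup (Fin 3) ℂ)⁻¹ :=
        mul_inv_rev (g : SpecialLinearGroup (Fin 3) ℂ) (h : SpecialLinearGroup (Fin 3) ℂ)
      have e3 : ((((g * h : G) : SpecialLinearGroup (Fin 3) ℂ)⁻¹ : SpecialLinearGroup (Fin 3) ℂ) :
          Matrix (Fin 3) (Fin 3) ℂ) =
          (((h : SpecialLinearGroup (Fin 3) ℂ)⁻¹ : SpecialLinearGroup (Fin 3) ℂ) :
            Matrix (Fin 3) (Fin 3) ℂ) *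
          (((g : SpecialLinearGroup (Fin 3) ℂ)⁻¹ : SpecialLinearGroup (Fin 3) ℂ) :
            Matrix (Fin 3) (Fin 3) ℂ) := congrArg Subtype.val e2
      rw [e3, transpose_mul] at e1
      have e4 : (c (g * h)) • M = (c g * c h) • M := by
        rw [← e1]
        calc _ = (((g : SpecialLinearGroup (Fin 3) ℂ)⁻¹ : SpecialLinearGroup (Fin 3) ℂ) :
                Matrix (Fin 3) (Fin 3) ℂ)ᵀ *
              ((((h : SpecialLinearGroup (Fin 3) ℂ)⁻¹ : SpecialLinearGroup (Fin 3) ℂ) :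
                Matrix (Fin 3) (Fin 3) ℂ)ᵀ * M *
              (((h : SpecialLinearGroup (Fin 3) ℂ)⁻¹ : SpecialLinearGroup (Fin 3) ℂ) :
                Matrix (Fin 3) (Fin 3) ℂ)) *
              (((g : SpecialLinearGroup (Fin 3) ℂ)⁻¹ : SpecialLinearGroup (Fin 3) ℂ) :
                Matrix (Fin 3) (Fin 3) ℂ) := by simp only [Matrix.mul_assoc]
          _ = _ := by rw [hcM h, mul_smul_comm, smul_mul_assoc, hcM g, smul_smul, mul_comm]
      exact smul_left_injective ℂ hM0 e4
    let χ : G →* ℂˣ := MonoidHom.mk' (fun g => Units.mk0 (c g) (hc0 g))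
      (fun g h => Units.ext (hmul g h))
    refine ⟨f, 2, by norm_num, le_rfl, hf0, hf2, χ, fun g v => ?_⟩
    rw [hf, hf, bil_mulVec (hcM g)]
    rfl
end
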